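/- arXiv:2005.12063 — 2 statements merged into one kernel-verified Lean document; each statement's English description precedes it below -/
import Mathlib

section
/- Let S ⊆ ℂᵐ be a compact polynomially convex set disjoint from a compact set T such that S ∪ T is polynomially convex. If S' ⊆ S is compact polynomially convex, then S' ∪ T is polynomially convex. -/
noncomputable section
open Set Metric MvPolynomial

/-- The polynomially convex hull of a set in `ℂⁿ`. -/
def polyHull {n : ℕ} (K : Set (EuclideanSpace ℂ (Fin n))) : Set (EuclideanSpace ℂ (Fin n)) :=
  {z | ∀ p : MvPolynomial (Fin n) ℂ,
    ‖eval (fun i => z i) p‖ ≤ sSup ((fun w => ‖eval (fun i => w i) p‖) '' K)}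

/-- A compact set in `ℂⁿ` is polynomially convex if it equals its polynomial hull. -/
def IsPolyConvex {n : ℕ} (K : Set (EuclideanSpace ℂ (Fin n))) : Prop :=
  polyHull K = K

/-- Polynomial hull for subsets of a product `ℂᴺ × ℂⁿ ≅ ℂ^{N+n}`, using polynomials in the
`N + n` coordinates. -/
def polyHull2 {N n : ℕ} (S : Set (EuclideanSpace ℂ (Fin N) × EuclideanSpace ℂ (Fin n))) :
    Set (EuclideanSpace ℂ (Fin N) × EuclideanSpace ℂ (Fin n)) :=
  {z | ∀ p : MvPolynomial (Fin N ⊕ Fin n) ℂ,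
    ‖eval (Sum.elim (fun i => z.1 i) (fun j => z.2 j)) p‖ ≤
      sSup ((fun w => ‖eval (Sum.elim (fun i => w.1 i) (fun j => w.2 j)) p‖) '' S)}

def IsPolyConvex2 {N n : ℕ} (S : Set (EuclideanSpace ℂ (Fin N) × EuclideanSpace ℂ (Fin n))) :
    Prop :=
  polyHull2 S = S

section Dbar
open scoped ContDiff Topology
open MeasureTheory

variable {n : ℕ}

/-- Twice the Wirtinger derivative `∂/∂z̄ⱼ` of a function on `ℂⁿ`. -/
def dbar {F : Type*} [NormedAddCommGroup F] [NormedSpace ℝ F] [SMul ℂ F] (j : Fin n)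
    (f : (Fin n → ℂ) → F) (z : Fin n → ℂ) : F :=
  fderiv ℝ f z (Pi.single j 1) + Complex.I • fderiv ℝ f z (Pi.single j Complex.I)

theorem dbar_clm_comp {F : Type*} [NormedAddCommGroup F] [NormedSpace ℂ F] (L : F →L[ℂ] ℂ)
    (j : Fin n) {f : (Fin n → ℂ) → F} {z : Fin n → ℂ} (hf : DifferentiableAt ℝ f z) :
    dbar j (fun y => L (f y)) z = L (dbar j f z) := by
  have h : fderiv ℝ (fun y => L (f y)) z = (L.restrictScalars ℝ).comp (fderiv ℝ f z) :=
    ((L.restrictScalars ℝ).hasFDerivAt.comp z hf.hasFDerivAt).fderiv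
  simp [dbar, h]

theorem contDiff_dbar {F : Type*} [NormedAddCommGroup F] [NormedSpace ℂ F] (j : Fin n)
    {f : (Fin n → ℂ) → F} (hf : ContDiff ℝ ∞ f) : ContDiff ℝ ∞ (dbar j f) := by
  have h : ContDiff ℝ ∞ (fderiv ℝ f) := hf.fderiv_right (by simp)
  exact (h.clm_apply contDiff_const).add
    (contDiff_const.smul (h.clm_apply contDiff_const))

theorem dbar_congr {j : Fin n} {f g : (Fin n → ℂ) → ℂ} {z : Fin n → ℂ} (h : f =ᶠ[𝓝 z] g) :
    dbar j f z = dbar j g z := by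
  simp [dbar, h.fderiv_eq]

@[simp] theorem dbar_const (j : Fin n) (c : ℂ) (z : Fin n → ℂ) :
    dbar j (fun _ => c) z = 0 := by
  simp [dbar]

theorem dbar_add {j : Fin n} {f g : (Fin n → ℂ) → ℂ} {z : Fin n → ℂ}
    (hf : DifferentiableAt ℝ f z) (hg : DifferentiableAt ℝ g z) :
    dbar j (fun y => f y + g y) z = dbar j f z + dbar j g z := by
  simp only [dbar, fderiv_fun_add hf hg, add_apply, smul_eq_mul]
  ring

theorem dbar_mul {j : Fin n} {f g : (Fin n → ℂ) → ℂ} {z : Fin n → ℂ}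
    (hf : DifferentiableAt ℝ f z) (hg : DifferentiableAt ℝ g z) :
    dbar j (fun y => f y * g y) z = f z * dbar j g z + dbar j f z * g z := by
  simp only [dbar, fderiv_fun_mul hf hg, add_apply,
    smul_apply, smul_eq_mul]
  ring

theorem dbar_const_sub {j : Fin n} (c : ℂ) {f : (Fin n → ℂ) → ℂ} {z : Fin n → ℂ} :
    dbar j (fun y => c - f y) z = - dbar j f z := by
  simp only [dbar, fderiv_const_sub, neg_apply, smul_eq_mul]
  ring

theorem dbar_sum {ι : Type*} {j : Fin n} {u : Finset ι} {f : ι → (Fin n → ℂ) → ℂ}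
    {z : Fin n → ℂ} (hf : ∀ k ∈ u, DifferentiableAt ℝ (f k) z) :
    dbar j (fun y => ∑ k ∈ u, f k y) z = ∑ k ∈ u, dbar j (f k) z := by
  simp [dbar, fderiv_fun_sum hf, Finset.mul_sum,
    Finset.sum_add_distrib]

theorem dbar_prod {ι : Type*} [DecidableEq ι] {j : Fin n} {u : Finset ι}
    {f : ι → (Fin n → ℂ) → ℂ} {z : Fin n → ℂ} (hf : ∀ k ∈ u, DifferentiableAt ℝ (f k) z) :
    dbar j (fun y => ∏ k ∈ u, f k y) z
      = ∑ l ∈ u, (∏ k ∈ u.erase l, f k z) * dbar j (f l) z := by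
  have h := (HasFDerivAt.finsetProd (fun k hk => (hf k hk).hasFDerivAt)).fderiv
  simp only [dbar, h, sum_apply, smul_apply, smul_eq_mul,
    Finset.mul_sum, ← Finset.sum_add_distrib]
  refine Finset.sum_congr rfl fun l _ => ?_
  ring

@[simp] theorem dbar_sub_coord (i j : Fin n) (x z : Fin n → ℂ) :
    dbar j (fun y => y i - x i) z = 0 := by
  have h : HasFDerivAt (fun y : Fin n → ℂ => y i - x i)
      (ContinuousLinearMap.proj (R := ℝ) (φ := fun _ : Fin n => ℂ) i) z :=
    (ContinuousLinearMap.proj (R := ℝ) (φ := fun _ : Fin n => ℂ) i).hasFDerivAt.sub_const _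
  simp only [dbar, h.fderiv, ContinuousLinearMap.proj_apply]
  by_cases hij : i = j
  · subst hij; simp
  · simp [hij]

theorem dbar_comm (j k : Fin n) {f : (Fin n → ℂ) → ℂ} (hf : ContDiff ℝ ∞ f) (z : Fin n → ℂ) :
    dbar j (dbar k f) z = dbar k (dbar j f) z := by
  have hd : Differentiable ℝ (fderiv ℝ f) :=
    (hf.fderiv_right (m := ∞) (by simp)).differentiable (by simp)
  have hsymm : IsSymmSndFDerivAt ℝ f z :=
    hf.contDiffAt.isSymmSndFDerivAt (by simp; exact WithTop.coe_le_coe.mpr le_top)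
  have key : ∀ (k : Fin n) (w : Fin n → ℂ), fderiv ℝ (dbar k f) z w
      = fderiv ℝ (fderiv ℝ f) z w (Pi.single k 1)
        + Complex.I * fderiv ℝ (fderiv ℝ f) z w (Pi.single k Complex.I) := by
    intro k w
    have h1 : ∀ v : Fin n → ℂ, HasFDerivAt (fun y => fderiv ℝ f y v)
        ((fderiv ℝ (fderiv ℝ f) z).flip v) z := fun v => by
      simpa using! (hd z).hasFDerivAt.clm_apply (hasFDerivAt_const v z)
    have h2 := (h1 (Pi.single k 1)).add ((h1 (Pi.single k Complex.I)).const_smul Complex.I)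
    have h3 : HasFDerivAt (dbar k f) _ z := h2
    rw [h3.fderiv]
    simp
  rw [dbar, dbar, key, key, key, key, smul_eq_mul, smul_eq_mul]
  rw [hsymm.eq (Pi.single j 1) (Pi.single k 1), hsymm.eq (Pi.single j 1) (Pi.single k Complex.I),
    hsymm.eq (Pi.single j Complex.I) (Pi.single k 1),
    hsymm.eq (Pi.single j Complex.I) (Pi.single k Complex.I)]
  ring

theorem hasCompactSupport_dbar {F : Type*} [NormedAddCommGroup F] [NormedSpace ℂ F] (j : Fin n)
    {f : (Fin n → ℂ) → F} (hc : HasCompactSupport f) : HasCompactSupport (dbar j f) := by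
  have h : HasCompactSupport (fderiv ℝ f) := hc.fderiv ℝ
  refine h.mono fun z hz => ?_
  contrapose! hz
  have : fderiv ℝ f z = 0 := by simpa using hz
  simp [dbar, this]

theorem integral_dbar_eq_zero (j : Fin n) {f : (Fin n → ℂ) → ℂ} (hf : ContDiff ℝ ∞ f)
    (hc : HasCompactSupport f) : ∫ z, dbar j f z = 0 := by
  have hcont : ∀ v, Continuous fun z => fderiv ℝ f z v := fun v =>
    (hf.continuous_fderiv (by simp)).clm_apply continuous_const
  have hi : ∀ v, Integrable fun z => fderiv ℝ f z v := fun v =>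
    (hcont v).integrable_of_hasCompactSupport (hc.fderiv_apply ℝ v)
  have h0 : ∀ v, ∫ z, fderiv ℝ f z v = 0 := fun v => by
    have := integral_smul_fderiv_eq_neg_fderiv_smul_of_integrable (μ := volume) (𝕜 := ℝ)
      (f := fun _ : Fin n → ℂ => (1 : ℝ)) (g := f) (v := v) (by simp) (by simpa using hi v)
      (by simpa using hf.continuous.integrable_of_hasCompactSupport hc) (by fun_prop)
      (fun x _ => hf.differentiable (by simp) x)
    simpa using this
  simp only [dbar, smul_eq_mul]
  rw [integral_add (hi _) ((hi _).const_mul _), integral_const_mul, h0, h0]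
  simp

/-- The matrix `(∂̄ⱼ sₖ)`, with row index `j` and column index `k`. -/
def dbarMatrix {F : Type*} [NormedAddCommGroup F] [NormedSpace ℝ F] [SMul ℂ F]
    (s : Fin n → (Fin n → ℂ) → F) (z : Fin n → ℂ) : Matrix (Fin n) (Fin n) F :=
  Matrix.of fun j k => dbar j (s k) z

/-- The cofactors of a `∂̄`-Jacobian matrix are divergence free. -/
theorem sum_sign_mul_dbar_prod (s : Fin n → (Fin n → ℂ) → ℂ) (hs : ∀ k, ContDiff ℝ ∞ (s k))
    (i : Fin n) (z : Fin n → ℂ) :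
    ∑ σ : Equiv.Perm (Fin n), ((Equiv.Perm.sign σ : ℤ) : ℂ) *
      dbar (σ i) (fun y => ∏ k ∈ Finset.univ.erase i, dbar (σ k) (s k) y) z = 0 := by
  have hd : ∀ j k, DifferentiableAt ℝ (dbar j (s k)) z := fun j k =>
    ((contDiff_dbar j (hs k)).differentiable (by simp)) z
  simp_rw [dbar_prod (fun k _ => hd _ k), Finset.mul_sum]
  rw [Finset.sum_comm]
  refine Finset.sum_eq_zero fun l hl => ?_
  have hli : l ≠ i := (Finset.mem_erase.mp hl).1
  refine self_eq_neg.mp ?_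
  rw [← Finset.sum_neg_distrib]
  refine Fintype.sum_equiv (Equiv.mulRight (Equiv.swap i l)) _ _ fun σ => ?_
  have h1 : ∀ k ∈ (Finset.univ.erase i).erase l,
      dbar ((σ * Equiv.swap i l) k) (s k) z = dbar (σ k) (s k) z := by
    intro k hk
    simp only [Finset.mem_erase, Finset.mem_univ, and_true] at hk
    rw [Equiv.Perm.mul_apply, Equiv.swap_apply_of_ne_of_ne hk.2 hk.1]
  simp only [Equiv.coe_mulRight]
  rw [Finset.prod_congr rfl h1]
  simp only [Equiv.Perm.sign_mul, Equiv.Perm.sign_swap hli.symm, Equiv.Perm.mul_apply,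
    Equiv.swap_apply_left, Equiv.swap_apply_right]
  rw [dbar_comm (σ i) (σ l) (hs l)]
  push_cast
  ring

/-- Stokes' theorem for `d(g ds₁ ⋯ dsₙ)`, with `g` of compact support. -/
theorem integral_det_updateCol_dbar (s : Fin n → (Fin n → ℂ) → ℂ)
    (hs : ∀ k, ContDiff ℝ ∞ (s k)) (i : Fin n) {g : (Fin n → ℂ) → ℂ} (hg : ContDiff ℝ ∞ g)
    (hc : HasCompactSupport g) :
    ∫ z, ((dbarMatrix s z).updateCol i fun j => dbar j g z).det = 0 := by
  set P : Equiv.Perm (Fin n) → (Fin n → ℂ) → ℂ := fun σ y =>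
    ∏ k ∈ Finset.univ.erase i, dbar (σ k) (s k) y with hP
  have hPs : ∀ σ, ContDiff ℝ ∞ (P σ) := fun σ =>
    contDiff_prod fun k _ => contDiff_dbar _ (hs k)
  have hgP : ∀ σ, ContDiff ℝ ∞ fun y => g y * P σ y := fun σ => hg.mul (hPs σ)
  have hgPc : ∀ σ, HasCompactSupport fun y => g y * P σ y := fun σ => hc.mul_right
  have hpt : ∀ z, ((dbarMatrix s z).updateCol i fun j => dbar j g z).det
      = ∑ σ : Equiv.Perm (Fin n), ((Equiv.Perm.sign σ : ℤ) : ℂ) *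
          dbar (σ i) (fun y => g y * P σ y) z := by
    intro z
    have h1 : ∀ σ : Equiv.Perm (Fin n), dbar (σ i) (fun y => g y * P σ y) z
        = g z * dbar (σ i) (P σ) z + dbar (σ i) g z * P σ z := fun σ =>
      dbar_mul (hg.differentiable (by simp) z) ((hPs σ).differentiable (by simp) z)
    have h2 := sum_sign_mul_dbar_prod s hs i z
    simp_rw [h1, mul_add, Finset.sum_add_distrib, mul_left_comm _ (g z), ← Finset.mul_sum]
    rw [h2, mul_zero, zero_add, Matrix.det_apply']
    refine Finset.sum_congr rfl fun σ _ => ?_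
    rw [← Finset.mul_prod_erase _ _ (Finset.mem_univ i)]
    congr 1
    simp only [Matrix.updateCol_self, hP]
    congr 1
    refine Finset.prod_congr rfl fun k hk => ?_
    simp [(Finset.mem_erase.mp hk).1, dbarMatrix]
  simp_rw [hpt]
  rw [integral_finsetSum]
  · refine Finset.sum_eq_zero fun σ _ => ?_
    rw [integral_const_mul, integral_dbar_eq_zero _ (hgP σ) (hgPc σ), mul_zero]
  · intro σ _
    exact (((contDiff_dbar _ (hgP σ)).continuous).integrable_of_hasCompactSupport
      (hasCompactSupport_dbar _ (hgPc σ))).const_mul _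

end Dbar

section Homotopy
open scoped ContDiff Topology
open MeasureTheory

variable {n : ℕ}

theorem hasDerivAt_det_add_smul (M N : Matrix (Fin n) (Fin n) ℂ) (t : ℝ) :
    HasDerivAt (fun t : ℝ => (M + (t : ℂ) • N).det)
      (∑ i, ((M + (t : ℂ) • N).updateCol i fun j => N j i).det) t := by
  have hent : ∀ j i, HasDerivAt (fun t : ℝ => (M + (t : ℂ) • N) j i) (N j i) t := fun j i => by
    simpa using! ((Complex.ofRealCLM.hasDerivAt (x := t)).mul_const (N j i)).const_add (M j i)
  have h := HasDerivAt.fun_sum (u := Finset.univ) fun (σ : Equiv.Perm (Fin n)) _ =>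
    (HasDerivAt.fun_finsetProd (u := Finset.univ) fun i _ => hent (σ i) i).const_mul
      ((Equiv.Perm.sign σ : ℤ) : ℂ)
  simp only [Matrix.det_apply'] at h ⊢
  refine h.congr_deriv ?_
  rw [Finset.sum_comm]
  refine Finset.sum_congr rfl fun σ _ => ?_
  rw [Finset.mul_sum]
  refine Finset.sum_congr rfl fun i _ => ?_
  rw [← Finset.prod_erase_mul _ _ (Finset.mem_univ i), smul_eq_mul]
  congr 2
  · refine Finset.prod_congr rfl fun k hk => ?_
    simp [(Finset.mem_erase.mp hk).1]
  · simp

theorem hasDerivAt_integral_of_compact_support {X : Type*} [TopologicalSpace X] [MeasurableSpace X]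
    [OpensMeasurableSpace X] {μ : Measure X} [IsFiniteMeasureOnCompacts μ]
    {f f' : ℝ → X → ℂ} {K : Set X} (hK : IsCompact K) (hKm : MeasurableSet K)
    (hf : ∀ t, Integrable (f t) μ) (hf' : Continuous (Function.uncurry f'))
    (hf'K : ∀ t, ∀ z ∉ K, f' t z = 0) (hf'm : ∀ t, AEStronglyMeasurable (f' t) μ)
    (hderiv : ∀ t z, HasDerivAt (fun t => f t z) (f' t z) t) (t₀ : ℝ) :
    HasDerivAt (fun t => ∫ z, f t z ∂μ) (∫ z, f' t₀ z ∂μ) t₀ := by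
  obtain ⟨C, hC⟩ := ((isCompact_closedBall t₀ 1).prod hK).exists_bound_of_continuousOn
    hf'.continuousOn
  refine (hasDerivAt_integral_of_dominated_loc_of_deriv_le (s := closedBall t₀ 1)
    (bound := K.indicator fun _ => C) (closedBall_mem_nhds t₀ one_pos)
    (Filter.Eventually.of_forall fun t => (hf t).aestronglyMeasurable) (hf t₀) (hf'm t₀)
    (Filter.Eventually.of_forall fun z t ht => ?_) ?_
    (Filter.Eventually.of_forall fun z t _ => hderiv t z)).2
  · by_cases hz : z ∈ K
    · simpa [hz] using hC (t, z) ⟨ht, hz⟩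
    · simp [hz, hf'K t z hz]
  · exact (integrable_indicator_iff hKm).2 (integrableOn_const hK.measure_lt_top.ne)

theorem dbar_eq_zero_of_notMem_tsupport {j : Fin n} {f : (Fin n → ℂ) → ℂ} {z : Fin n → ℂ}
    (hz : z ∉ tsupport f) : dbar j f z = 0 := by
  rw [dbar_congr (notMem_tsupport_iff_eventuallyEq.mp hz)]
  exact dbar_const j 0 z

/-- If `∑ (zᵢ - xᵢ) sᵢ = 1 - ψ` near the support of `ψ`, then the first variation of
`∫ ψ det (∂̄s)` along the solutions of this equation vanishes. -/
theorem integral_variation_eq_zero {Ω : Set (Fin n → ℂ)} (hΩ : IsOpen Ω) (x : Fin n → ℂ)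
    {ψ φ : (Fin n → ℂ) → ℂ} {s r : Fin n → (Fin n → ℂ) → ℂ}
    (hψ : ContDiff ℝ ∞ ψ) (hs : ∀ i, ContDiff ℝ ∞ (s i)) (hr : ∀ i, ContDiff ℝ ∞ (r i))
    (hψc : HasCompactSupport ψ)
    (hψΩ : tsupport ψ ⊆ Ω) (hφΩ : tsupport φ ⊆ Ω)
    (hsψ : ∀ z ∈ Ω, ∑ i, (z i - x i) * s i z = 1 - ψ z)
    (hrφ : ∀ z ∈ Ω, ∑ i, (z i - x i) * r i z = - φ z) :
    ∫ z, (φ z * (dbarMatrix s z).det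
      + ψ z * ∑ i, ((dbarMatrix s z).updateCol i fun j => dbar j (r i) z).det) = 0 := by
  have hdψ : ∀ z, DifferentiableAt ℝ ψ z := hψ.differentiable (by simp)
  have hdr : ∀ i z, DifferentiableAt ℝ (r i) z := fun i => (hr i).differentiable (by simp)
  have hds : ∀ i z, DifferentiableAt ℝ (s i) z := fun i => (hs i).differentiable (by simp)
  have hrow : ∀ z ∈ Ω, ∀ j, dbar j ψ z = - ∑ i, (z i - x i) * dbar j (s i) z := by
    intro z hz j
    have h1 : ψ =ᶠ[𝓝 z] fun y => 1 - ∑ i, (y i - x i) * s i y := by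
      filter_upwards [hΩ.mem_nhds hz] with y hy
      rw [hsψ y hy]; ring
    have hdc : ∀ i, DifferentiableAt ℝ (fun y : Fin n → ℂ => y i - x i) z := fun i => by fun_prop
    rw [dbar_congr h1, dbar_const_sub, dbar_sum fun i _ => (hdc i).fun_mul (hds i z)]
    congr 1
    refine Finset.sum_congr rfl fun i _ => ?_
    rw [dbar_mul (hdc i) (hds i z), dbar_sub_coord]
    ring
  have hpt : ∀ z, φ z * (dbarMatrix s z).det
      + ψ z * ∑ i, ((dbarMatrix s z).updateCol i fun j => dbar j (r i) z).det
      = ∑ i, ((dbarMatrix s z).updateCol i fun j => dbar j (fun y => ψ y * r i y) z).det := by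
    intro z
    have h1 : ∀ i, ((dbarMatrix s z).updateCol i fun j => dbar j (fun y => ψ y * r i y) z).det
        = ψ z * ((dbarMatrix s z).updateCol i fun j => dbar j (r i) z).det
          + r i z * ((dbarMatrix s z).updateCol i fun j => dbar j ψ z).det := by
      intro i
      rw [← Matrix.det_updateCol_smul, ← Matrix.det_updateCol_smul, ← Matrix.det_updateCol_add]
      congr 2
      ext j
      simp [dbar_mul (hdψ z) (hdr i z), mul_comm]
    simp_rw [h1, Finset.sum_add_distrib, ← Finset.mul_sum]
    rw [add_comm, add_right_inj]
    by_cases hz : z ∈ Ω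
    · have h2 : ∀ i, ((dbarMatrix s z).updateCol i fun j => dbar j ψ z).det
          = - (z i - x i) * (dbarMatrix s z).det := by
        intro i
        have : (fun j => dbar j ψ z) = fun j => ∑ k, -(z k - x k) • dbarMatrix s z j k := by
          ext j
          rw [hrow z hz j, ← Finset.sum_neg_distrib]
          refine Finset.sum_congr rfl fun k _ => ?_
          simp only [dbarMatrix, Matrix.of_apply, smul_eq_mul]
          ring
        rw [this, Matrix.det_updateCol_sum]
        simp
      simp_rw [h2]
      have h3 := hrφ z hz
      have h4 : ∀ i, r i z * (-(z i - x i) * (dbarMatrix s z).det)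
          = - ((z i - x i) * r i z) * (dbarMatrix s z).det := fun i => by ring
      simp_rw [h4]
      rw [← Finset.sum_mul, Finset.sum_neg_distrib, h3, neg_neg]
    · have h2 : φ z = 0 := image_eq_zero_of_notMem_tsupport fun h => hz (hφΩ h)
      have h3 : ∀ j, dbar j ψ z = 0 := fun j =>
        dbar_eq_zero_of_notMem_tsupport fun h => hz (hψΩ h)
      rw [h2, zero_mul]
      symm
      refine Finset.sum_eq_zero fun i _ => ?_
      rw [Matrix.det_eq_zero_of_column_eq_zero i (by simp [h3]), mul_zero]
  simp_rw [hpt]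
  have hsm : ∀ i, ContDiff ℝ ∞ fun y => ψ y * r i y := fun i => hψ.mul (hr i)
  rw [integral_finsetSum]
  · exact Finset.sum_eq_zero fun i _ => integral_det_updateCol_dbar s hs i (hsm i) hψc.mul_right
  · intro i _
    have hc : Continuous fun z =>
        ((dbarMatrix s z).updateCol i fun j => dbar j (fun y => ψ y * r i y) z).det := by
      refine Continuous.matrix_det (Continuous.matrix_updateCol i ?_ ?_)
      · exact continuous_matrix fun j k => (contDiff_dbar j (hs k)).continuous
      · exact continuous_pi fun j => (contDiff_dbar j (hsm i)).continuous
    refine hc.integrable_of_hasCompactSupport ?_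
    refine HasCompactSupport.intro (K := tsupport ψ) hψc fun z hz => ?_
    refine Matrix.det_eq_zero_of_column_eq_zero i fun j => ?_
    rw [Matrix.updateCol_self]
    exact dbar_eq_zero_of_notMem_tsupport fun h => hz (tsupport_mul_subset_left h)

/-- `∫ ψ det (∂̄s)` is the same for all solutions of `∑ (zᵢ - xᵢ) sᵢ = 1 - ψ` with `ψ` of compact
support. -/
theorem integral_mul_det_dbarMatrix_eq {Ω : Set (Fin n → ℂ)} (hΩ : IsOpen Ω) (x : Fin n → ℂ)
    {ψ₀ ψ₁ : (Fin n → ℂ) → ℂ} {s₀ s₁ : Fin n → (Fin n → ℂ) → ℂ}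
    (hψ₀ : ContDiff ℝ ∞ ψ₀) (hs₀ : ∀ i, ContDiff ℝ ∞ (s₀ i))
    (hψ₁ : ContDiff ℝ ∞ ψ₁) (hs₁ : ∀ i, ContDiff ℝ ∞ (s₁ i))
    (hc₀ : HasCompactSupport ψ₀) (hc₁ : HasCompactSupport ψ₁)
    (hΩ₀ : tsupport ψ₀ ⊆ Ω) (hΩ₁ : tsupport ψ₁ ⊆ Ω)
    (h₀ : ∀ z ∈ Ω, ∑ i, (z i - x i) * s₀ i z = 1 - ψ₀ z)
    (h₁ : ∀ z ∈ Ω, ∑ i, (z i - x i) * s₁ i z = 1 - ψ₁ z) :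
    ∫ z, ψ₀ z * (dbarMatrix s₀ z).det = ∫ z, ψ₁ z * (dbarMatrix s₁ z).det := by
  set φ : (Fin n → ℂ) → ℂ := fun z => ψ₁ z - ψ₀ z with hφ
  set r : Fin n → (Fin n → ℂ) → ℂ := fun i z => s₁ i z - s₀ i z with hr
  set ψ : ℝ → (Fin n → ℂ) → ℂ := fun t z => ψ₀ z + (t : ℂ) * φ z with hψ
  set s : ℝ → Fin n → (Fin n → ℂ) → ℂ := fun t i z => s₀ i z + (t : ℂ) * r i z with hs
  have hφs : ContDiff ℝ ∞ φ := hψ₁.sub hψ₀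
  have hrs : ∀ i, ContDiff ℝ ∞ (r i) := fun i => (hs₁ i).sub (hs₀ i)
  have hψs : ∀ t, ContDiff ℝ ∞ (ψ t) := fun t => hψ₀.add (contDiff_const.mul hφs)
  have hss : ∀ t i, ContDiff ℝ ∞ (s t i) := fun t i => (hs₀ i).add (contDiff_const.mul (hrs i))
  set K := tsupport ψ₀ ∪ tsupport ψ₁ with hKdef
  have hK : IsCompact K := IsCompact.union hc₀ hc₁
  have hKΩ : K ⊆ Ω := union_subset hΩ₀ hΩ₁
  have hφK : ∀ z ∉ K, φ z = 0 := fun z hz => by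
    rw [hKdef, mem_union, not_or] at hz
    simp [hφ, image_eq_zero_of_notMem_tsupport hz.1, image_eq_zero_of_notMem_tsupport hz.2]
  have hψK : ∀ t, ∀ z ∉ K, ψ t z = 0 := fun t z hz => by
    have h := hφK z hz
    rw [hKdef, mem_union, not_or] at hz
    simp [hψ, image_eq_zero_of_notMem_tsupport hz.1, h]
  have hts : ∀ {f : (Fin n → ℂ) → ℂ}, (∀ z ∉ K, f z = 0) → tsupport f ⊆ K := fun {f} hf =>
    closure_minimal (fun z hz => by_contra fun h => hz (hf z h)) hK.isClosed
  have hmat : ∀ t z, dbarMatrix (s t) z = dbarMatrix s₀ z + (t : ℂ) • dbarMatrix r z := by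
    intro t z
    ext j k
    have h1 := (hs₀ k).differentiable (by simp) z
    have h2 := (hrs k).differentiable (by simp) z
    simp [dbarMatrix, hs, dbar_add h1 (h2.const_mul (t : ℂ)),
      dbar_mul (differentiableAt_const (t : ℂ)) h2]
  have hM : Continuous fun p : ℝ × (Fin n → ℂ) => dbarMatrix (s p.1) p.2 := by
    simp_rw [hmat]
    have e1 : Continuous (dbarMatrix s₀) :=
      continuous_matrix fun j k => (contDiff_dbar j (hs₀ k)).continuous
    have e2 : Continuous (dbarMatrix r) :=
      continuous_matrix fun j k => (contDiff_dbar j (hrs k)).continuous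
    fun_prop
  have hM' : ∀ t, Continuous (dbarMatrix (s t)) := fun t =>
    hM.comp (continuous_const.prodMk continuous_id)
  set f : ℝ → (Fin n → ℂ) → ℂ := fun t z => ψ t z * (dbarMatrix (s t) z).det with hf
  set f' : ℝ → (Fin n → ℂ) → ℂ := fun t z => φ z * (dbarMatrix (s t) z).det
      + ψ t z * ∑ i, ((dbarMatrix (s t) z).updateCol i fun j => dbar j (r i) z).det with hf'
  have hf'c : Continuous (Function.uncurry f') := by
    have e1 : Continuous fun p : ℝ × (Fin n → ℂ) => ψ p.1 p.2 := by
      have := hψ₀.continuous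
      have := hφs.continuous
      simp only [hψ]
      fun_prop
    have e2 : Continuous fun p : ℝ × (Fin n → ℂ) => φ p.2 := hφs.continuous.comp continuous_snd
    refine (e2.mul hM.matrix_det).add (e1.mul (continuous_finsetSum _ fun i _ => ?_))
    refine Continuous.matrix_det (Continuous.matrix_updateCol i hM ?_)
    exact continuous_pi fun j => (contDiff_dbar j (hrs i)).continuous.comp continuous_snd
  have hfi : ∀ t, Integrable (f t) := fun t =>
    (((hψs t).continuous).mul (hM' t).matrix_det).integrable_of_hasCompactSupport
      (HasCompactSupport.intro hK fun z hz => by simp [hψK t z hz])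
  have hder : ∀ t, HasDerivAt (fun t => ∫ z, f t z) 0 t := by
    intro t
    have h := hasDerivAt_integral_of_compact_support (μ := volume) (f := f) (f' := f') hK
      hK.measurableSet hfi hf'c (fun t z hz => by simp [hf', hφK z hz, hψK t z hz])
      (fun t => (hf'c.comp (continuous_const.prodMk continuous_id)).aestronglyMeasurable)
      (fun t z => by
        have e1 : HasDerivAt (fun t => ψ t z) (φ z) t := by
          refine (((Complex.ofRealCLM.hasDerivAt (x := t)).mul_const (φ z)).const_add
            (ψ₀ z)).congr_deriv ?_
          simp
        have e2 := hasDerivAt_det_add_smul (dbarMatrix s₀ z) (dbarMatrix r z) t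
        simp_rw [← hmat] at e2
        exact e1.mul e2) t
    refine h.congr_deriv ?_
    refine integral_variation_eq_zero hΩ x (hψs t) (hss t) hrs
      (HasCompactSupport.intro hK (hψK t))
      ((hts (hψK t)).trans hKΩ) ((hts hφK).trans hKΩ) (fun z hz => ?_) (fun z hz => ?_)
    · have : ∀ i, (z i - x i) * s t i z = (1 - (t : ℂ)) * ((z i - x i) * s₀ i z)
          + (t : ℂ) * ((z i - x i) * s₁ i z) := fun i => by simp only [hs, hr]; ring
      simp_rw [this, Finset.sum_add_distrib, ← Finset.mul_sum, h₀ z hz, h₁ z hz]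
      simp only [hψ, hφ]; ring
    · simp only [hr, mul_sub, Finset.sum_sub_distrib]
      rw [h₀ z hz, h₁ z hz]
      simp only [hφ]; ring
  have hconst := is_const_of_deriv_eq_zero (fun t => (hder t).differentiableAt)
    (fun t => (hder t).deriv) 0 1
  simpa [hf, hψ, hs, hφ, hr] using hconst

end Homotopy

section Radial
open scoped ContDiff Topology
open MeasureTheory

variable {n : ℕ}

theorem exists_radial_profile {ρ : ℝ} (hρ : 0 < ρ) :
    ∃ h : ℝ → ℝ, ContDiff ℝ ∞ h ∧ (∀ t, ρ ≤ t → t * h t = 1) ∧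
      (∀ t, 0 ≤ h t ∧ t * h t ≤ 1 ∧ 0 ≤ h t + t * deriv h t) ∧
      ∃ t, 0 < t ∧ 0 < h t ∧ t * h t < 1 ∧ 0 < h t + t * deriv h t := by
  set g : ℝ → ℝ := fun t => Real.smoothTransition (2 * t / ρ - 1) with hg
  set h : ℝ → ℝ := fun t => g t / t with hh
  have hgs : ContDiff ℝ ∞ g := Real.smoothTransition.contDiff.comp (by fun_prop)
  have hg0 : ∀ t, t ≤ ρ / 2 → g t = 0 := fun t ht =>
    Real.smoothTransition.zero_of_nonpos (by rw [sub_nonpos, div_le_one hρ]; linarith)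
  have hth : ∀ t, t * h t = g t := fun t => by
    rcases eq_or_ne t 0 with rfl | ht
    · rw [hg0 0 (by positivity), zero_mul]
    · simp only [hh]; field_simp
  have hhs : ContDiff ℝ ∞ h := by
    rw [contDiff_iff_contDiffAt]
    intro t
    rcases lt_or_ge 0 t with ht | ht
    · exact hgs.contDiffAt.div contDiffAt_id ht.ne'
    · refine (contDiffAt_const (c := (0 : ℝ))).congr_of_eventuallyEq ?_
      filter_upwards [Iio_mem_nhds (show t < ρ / 2 by linarith)] with u hu
      simp [hh, hg0 u (le_of_lt hu)]
  have hder : ∀ t, deriv g t = h t + t * deriv h t := fun t => by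
    have h1 : HasDerivAt (fun u => u * h u) (1 * h t + t * deriv h t) t :=
      (hasDerivAt_id t).fun_mul (hhs.differentiable (by simp) t).hasDerivAt
    rw [funext hth] at h1
    rw [h1.deriv, one_mul]
  have hmono : Monotone g := fun a b hab => Real.smoothTransition.monotone (by gcongr)
  refine ⟨h, hhs, fun t ht => ?_, fun t => ⟨?_, ?_, ?_⟩, ?_⟩
  · rw [hth]
    exact Real.smoothTransition.one_of_one_le (by rw [le_sub_iff_add_le, le_div_iff₀ hρ]; linarith)
  · rcases lt_or_ge 0 t with ht | ht
    · exact div_nonneg (Real.smoothTransition.nonneg _) ht.le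
    · simp [hh, hg0 t (by linarith)]
  · rw [hth]; exact Real.smoothTransition.le_one _
  · rw [← hder]; exact hmono.deriv_nonneg
  · obtain ⟨c, hc, hcd⟩ := exists_deriv_eq_slope g (half_lt_self hρ) hgs.continuous.continuousOn
      (hgs.differentiable (by simp)).differentiableOn
    have hc0 : 0 < c := by linarith [hc.1, half_pos hρ]
    refine ⟨c, hc0, ?_, ?_, ?_⟩
    · refine div_pos (Real.smoothTransition.pos_of_pos ?_) hc0
      rw [sub_pos, one_lt_div hρ]; linarith [hc.1]
    · rw [hth]
      refine Real.smoothTransition.lt_one_of_lt_one ?_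
      rw [sub_lt_iff_lt_add, div_lt_iff₀ hρ]; linarith [hc.2]
    · rw [← hder, hcd, hg0 _ le_rfl]
      have : g ρ = 1 := Real.smoothTransition.one_of_one_le
        (by rw [le_sub_iff_add_le, le_div_iff₀ hρ]; linarith)
      rw [this]
      apply div_pos <;> linarith

/-- The squared Euclidean norm on `ℂⁿ`. -/
def normSqSum (w : Fin n → ℂ) : ℝ := ∑ i, Complex.normSq (w i)

theorem contDiff_normSqSum : ContDiff ℝ ∞ (normSqSum (n := n)) := by
  refine ContDiff.sum fun i _ => ?_
  simp only [Complex.normSq_apply]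
  have h1 : ContDiff ℝ ∞ fun w : Fin n → ℂ => (w i).re :=
    Complex.reCLM.contDiff.comp (contDiff_apply ℝ ℂ i)
  have h2 : ContDiff ℝ ∞ fun w : Fin n → ℂ => (w i).im :=
    Complex.imCLM.contDiff.comp (contDiff_apply ℝ ℂ i)
  exact (h1.mul h1).add (h2.mul h2)

theorem norm_sq_le_normSqSum (w : Fin n → ℂ) : ‖w‖ ^ 2 ≤ normSqSum w := by
  have h0 : 0 ≤ normSqSum w := Finset.sum_nonneg fun i _ => Complex.normSq_nonneg _
  have h : ‖w‖ ≤ Real.sqrt (normSqSum w) := by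
    refine (pi_norm_le_iff_of_nonneg (Real.sqrt_nonneg _)).2 fun i => Real.le_sqrt_of_sq_le ?_
    rw [← Complex.normSq_eq_norm_sq]
    exact Finset.single_le_sum (f := fun i => Complex.normSq (w i))
      (fun i _ => Complex.normSq_nonneg _) (Finset.mem_univ i)
  calc ‖w‖ ^ 2 ≤ Real.sqrt (normSqSum w) ^ 2 := by gcongr
    _ = normSqSum w := Real.sq_sqrt h0

theorem sum_mul_conj_eq_normSqSum (w : Fin n → ℂ) :
    ∑ i, w i * (starRingEnd ℂ) (w i) = (normSqSum w : ℂ) := by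
  simp [normSqSum, Complex.mul_conj]

theorem fderiv_normSqSum_sub (x z v : Fin n → ℂ) :
    HasFDerivAt (fun y => normSqSum (y - x)) (fderiv ℝ (normSqSum (n := n)) (z - x)) z ∧
    fderiv ℝ (normSqSum (n := n)) (z - x) v
      = ∑ i, 2 * ((z i - x i).re * (v i).re + (z i - x i).im * (v i).im) := by
  constructor
  · have := ((contDiff_normSqSum (n := n)).differentiable (by simp) (z - x)).hasFDerivAt.comp z
      ((hasFDerivAt_id z).sub_const x)
    simpa using! this
  · have hre : ∀ i, HasFDerivAt (fun w : Fin n → ℂ => (w i).re) (Complex.reCLM.comp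
        (ContinuousLinearMap.proj (R := ℝ) (φ := fun _ : Fin n => ℂ) i)) (z - x) := fun i =>
      ContinuousLinearMap.hasFDerivAt (Complex.reCLM.comp
        (ContinuousLinearMap.proj (R := ℝ) (φ := fun _ : Fin n => ℂ) i))
    have him : ∀ i, HasFDerivAt (fun w : Fin n → ℂ => (w i).im) (Complex.imCLM.comp
        (ContinuousLinearMap.proj (R := ℝ) (φ := fun _ : Fin n => ℂ) i)) (z - x) := fun i =>
      ContinuousLinearMap.hasFDerivAt (Complex.imCLM.comp
        (ContinuousLinearMap.proj (R := ℝ) (φ := fun _ : Fin n => ℂ) i))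
    have h := HasFDerivAt.fun_sum (u := Finset.univ) fun i _ =>
      ((hre i).fun_mul (hre i)).fun_add ((him i).fun_mul (him i))
    have hfun : normSqSum (n := n)
        = fun w => ∑ i, ((w i).re * (w i).re + (w i).im * (w i).im) := by
      ext w
      simp only [normSqSum, Complex.normSq_apply]
    rw [hfun, h.fderiv, sum_apply]
    refine Finset.sum_congr rfl fun i _ => ?_
    simp
    ring

theorem dbar_comp_normSqSum_sub {h : ℝ → ℝ} (hh : ContDiff ℝ ∞ h) (j : Fin n)
    (x z : Fin n → ℂ) :
    dbar j (fun y => (h (normSqSum (y - x)) : ℂ)) z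
      = 2 * ((deriv h (normSqSum (z - x)) : ℝ) : ℂ) * (z j - x j) := by
  have h1 := (fderiv_normSqSum_sub x z 0).1
  have h2 := ((hh.differentiable (by simp) (normSqSum (z - x))).hasDerivAt.comp_hasFDerivAt z h1)
  have h3 := Complex.ofRealCLM.hasFDerivAt.comp z h2
  have h4 : fderiv ℝ (fun y => (h (normSqSum (y - x)) : ℂ)) z = _ := h3.fderiv
  rw [dbar, h4]
  simp only [ContinuousLinearMap.comp_apply, smul_apply, (fderiv_normSqSum_sub x z _).2]
  rw [Finset.sum_eq_single j (fun i _ hi => by simp [hi]) (by simp),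
    Finset.sum_eq_single j (fun i _ hi => by simp [hi]) (by simp)]
  apply Complex.ext <;> simp <;> ring

theorem dbar_conj_sub (i j : Fin n) (x z : Fin n → ℂ) :
    dbar j (fun y => (starRingEnd ℂ) (y i - x i)) z = if j = i then 2 else 0 := by
  have h1 : HasFDerivAt (fun y : Fin n → ℂ => y i - x i)
      (ContinuousLinearMap.proj (R := ℝ) (φ := fun _ : Fin n => ℂ) i) z :=
    (ContinuousLinearMap.proj (R := ℝ) (φ := fun _ : Fin n => ℂ) i).hasFDerivAt.sub_const _
  have h2 := (Complex.conjCLE.toContinuousLinearMap.hasFDerivAt).comp z h1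
  have h3 : fderiv ℝ (fun y : Fin n → ℂ => (starRingEnd ℂ) (y i - x i)) z = _ := h2.fderiv
  rw [dbar, h3]
  by_cases hij : j = i
  · subst hij
    simp
    norm_num
  · simp [hij, Ne.symm hij]

/-- The sections `conj (zᵢ - xᵢ) h(|z - x|²)`. -/
def radialSection (h : ℝ → ℝ) (x : Fin n → ℂ) (i : Fin n) (z : Fin n → ℂ) : ℂ :=
  (starRingEnd ℂ) (z i - x i) * (h (normSqSum (z - x)) : ℂ)

theorem contDiff_comp_normSqSum_sub {h : ℝ → ℝ} (hh : ContDiff ℝ ∞ h) (x : Fin n → ℂ) :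
    ContDiff ℝ ∞ fun z => (h (normSqSum (z - x)) : ℂ) :=
  Complex.ofRealCLM.contDiff.comp
    (hh.comp (contDiff_normSqSum.comp (contDiff_id.sub contDiff_const)))

theorem contDiff_conj_sub (x : Fin n → ℂ) (i : Fin n) :
    ContDiff ℝ ∞ fun z : Fin n → ℂ => (starRingEnd ℂ) (z i - x i) :=
  Complex.conjCLE.contDiff.comp ((contDiff_apply ℝ ℂ i).sub contDiff_const)

theorem contDiff_radialSection {h : ℝ → ℝ} (hh : ContDiff ℝ ∞ h) (x : Fin n → ℂ) (i : Fin n) :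
    ContDiff ℝ ∞ (radialSection h x i) :=
  (contDiff_conj_sub x i).mul (contDiff_comp_normSqSum_sub hh x)

theorem sum_mul_radialSection (h : ℝ → ℝ) (x z : Fin n → ℂ) :
    ∑ i, (z i - x i) * radialSection h x i z
      = ((normSqSum (z - x) * h (normSqSum (z - x)) : ℝ) : ℂ) := by
  simp only [radialSection, ← mul_assoc]
  rw [← Finset.sum_mul]
  have := sum_mul_conj_eq_normSqSum (z - x)
  simp only [Pi.sub_apply] at this
  rw [this]
  push_cast
  rfl

theorem det_dbarMatrix_radialSection (hn : n ≠ 0) {h : ℝ → ℝ} (hh : ContDiff ℝ ∞ h)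
    (x z : Fin n → ℂ) :
    (dbarMatrix (radialSection h x) z).det
      = ((2 ^ n * (h (normSqSum (z - x)) ^ (n - 1) * (h (normSqSum (z - x))
        + normSqSum (z - x) * deriv h (normSqSum (z - x)))) : ℝ) : ℂ) := by
  set q := normSqSum (z - x) with hq
  have hM : dbarMatrix (radialSection h x) z = (2 : ℂ) • (Matrix.scalar (Fin n) (h q : ℂ)
      - Matrix.vecMulVec (fun j => -(z j - x j))
        (fun i => ((deriv h q : ℝ) : ℂ) * (starRingEnd ℂ) (z i - x i))) := by
    ext j i
    have : dbar j (radialSection h x i) z = _ := dbar_mul (j := j) ((contDiff_conj_sub x i).differentiable (by simp) z)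
      ((contDiff_comp_normSqSum_sub hh x).differentiable (by simp) z)
    simp only [dbarMatrix, Matrix.of_apply]
    rw [this, dbar_conj_sub, dbar_comp_normSqSum_sub hh]
    simp only [Matrix.smul_apply, Matrix.sub_apply, Matrix.vecMulVec_apply, Matrix.scalar_apply,
      Matrix.diagonal_apply, smul_eq_mul, ← hq]
    split_ifs <;> ring
  rw [hM, Matrix.det_smul, ← Matrix.eval_charpoly, Matrix.charpoly_vecMulVec]
  have hdot : (fun j => -(z j - x j)) ⬝ᵥ
      (fun i => ((deriv h q : ℝ) : ℂ) * (starRingEnd ℂ) (z i - x i)) = - (((deriv h q : ℝ) : ℂ) * q) := by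
    rw [hq, ← sum_mul_conj_eq_normSqSum, dotProduct, Finset.mul_sum, ← Finset.sum_neg_distrib]
    refine Finset.sum_congr rfl fun i _ => ?_
    simp only [Pi.sub_apply]
    ring
  rw [hdot]
  obtain ⟨m, rfl⟩ := Nat.exists_eq_succ_of_ne_zero hn
  simp
  ring

/-- The normalising constant of the kernel built from radial sections. -/
theorem exists_integral_radialSection (hn : n ≠ 0) {ρ : ℝ} (hρ : 0 < ρ) :
    ∃ h : ℝ → ℝ, ContDiff ℝ ∞ h ∧ (∀ t, ρ ≤ t → t * h t = 1) ∧ ∃ c : ℂ, c ≠ 0 ∧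
      ∀ x : Fin n → ℂ, ∫ z, (1 - ((normSqSum (z - x) * h (normSqSum (z - x)) : ℝ) : ℂ)) *
        (dbarMatrix (radialSection h x) z).det = c := by
  obtain ⟨h, hh, hρh, hnn, t₀, ht₀, ht₁, ht₂, ht₃⟩ := exists_radial_profile hρ
  set G : ℝ → ℝ := fun t => (1 - t * h t) * (2 ^ n * (h t ^ (n - 1) * (h t + t * deriv h t)))
    with hG
  have hGc : Continuous G := by
    have h1 := hh.continuous
    have h2 : Continuous (deriv h) := hh.continuous_deriv (by simp)
    simp only [hG]
    fun_prop
  have hG0 : ∀ t, 0 ≤ G t := fun t => by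
    obtain ⟨e1, e2, e3⟩ := hnn t
    have : 0 ≤ 1 - t * h t := by linarith
    positivity
  have hGpos : 0 < G t₀ := by
    have : 0 < 1 - t₀ * h t₀ := by linarith
    positivity
  have hGQ : Continuous fun w : Fin n → ℂ => G (normSqSum w) :=
    hGc.comp contDiff_normSqSum.continuous
  have hsupp : HasCompactSupport fun w : Fin n → ℂ => G (normSqSum w) := by
    refine HasCompactSupport.intro (isCompact_closedBall (0 : Fin n → ℂ) (Real.sqrt ρ))
      fun w hw => ?_
    have h1 : Real.sqrt ρ < ‖w‖ := by simpa using hw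
    have h2 : ρ ≤ normSqSum w := by
      refine le_trans ?_ (norm_sq_le_normSqSum w)
      exact ((Real.sqrt_lt' (by linarith [Real.sqrt_nonneg ρ])).1 h1).le
    simp [hG, hρh _ h2]
  refine ⟨h, hh, hρh, ((∫ w : Fin n → ℂ, G (normSqSum w) : ℝ) : ℂ), ?_, fun x => ?_⟩
  · rw [Complex.ofReal_ne_zero]
    set w₀ : Fin n → ℂ := Pi.single ⟨0, Nat.pos_of_ne_zero hn⟩ (Real.sqrt t₀ : ℂ) with hw₀
    have hw₀' : normSqSum w₀ = t₀ := by
      rw [normSqSum, Finset.sum_eq_single ⟨0, Nat.pos_of_ne_zero hn⟩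
        (fun i _ hi => by simp [hw₀, hi]) (by simp)]
      simp [hw₀, Real.mul_self_sqrt ht₀.le]
    refine (hGQ.integral_pos_of_hasCompactSupport_nonneg_nonzero hsupp (fun w => hG0 _)
      (x := w₀) ?_).ne'
    rw [hw₀']
    exact hGpos.ne'
  · rw [← integral_sub_right_eq_self (fun w => G (normSqSum w)) x, ← integral_complex_ofReal]
    congr 1
    ext z
    rw [det_dbarMatrix_radialSection hn hh]
    simp only [hG]
    push_cast
    ring

end Radial

section BanachSection
open scoped ContDiff Topology Manifold
open MeasureTheory

variable {n : ℕ} {R : Type*} [NormedCommRing R] [NormedAlgebra ℂ R]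

theorem contDiff_sum_algebraMap_sub_mul (a : Fin n → R) {s : Fin n → (Fin n → ℂ) → R}
    (hs : ∀ i, ContDiff ℝ ∞ (s i)) :
    ContDiff ℝ ∞ fun z : Fin n → ℂ => ∑ i, (algebraMap ℂ R (z i) - a i) * s i z := by
  refine ContDiff.sum fun i _ => ContDiff.mul (ContDiff.sub ?_ contDiff_const) (hs i)
  exact (((Algebra.linearMap ℂ R).toContinuousLinearMap.restrictScalars ℝ).comp
    (ContinuousLinearMap.proj (R := ℝ) (φ := fun _ : Fin n => ℂ) i)).contDiff

/-- Pointwise solvable Bezout equations over a closed set of parameters have a solution depending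
smoothly on the parameter. -/
theorem exists_contDiff_bezout [CompleteSpace R] (a : Fin n → R) {C : Set (Fin n → ℂ)}
    (hC : IsClosed C)
    (h : ∀ z ∈ C, ∃ b : Fin n → R, ∑ i, (algebraMap ℂ R (z i) - a i) * b i = 1) :
    ∃ s : Fin n → (Fin n → ℂ) → R, (∀ i, ContDiff ℝ ∞ (s i)) ∧
      ∀ z ∈ C, ∑ i, (algebraMap ℂ R (z i) - a i) * s i z = 1 := by
  obtain ⟨g, hg⟩ := exists_contMDiffMap_forall_mem_convex_of_local (n := (⊤ : ℕ∞))
    (F := Fin n → R) 𝓘(ℝ, Fin n → ℂ)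
    (t := fun z => {b : Fin n → R | z ∈ C → ∑ i, (algebraMap ℂ R (z i) - a i) * b i = 1})
    (fun z b hb b' hb' u v _ _ huv hz => by
      have e : ∀ i, (algebraMap ℂ R (z i) - a i) * (u • b + v • b') i
          = u • ((algebraMap ℂ R (z i) - a i) * b i)
            + v • ((algebraMap ℂ R (z i) - a i) * b' i) := fun i => by
        simp only [Pi.add_apply, Pi.smul_apply, mul_add, mul_smul_comm]
      simp_rw [e, Finset.sum_add_distrib, ← Finset.smul_sum]
      rw [hb hz, hb' hz, ← add_smul, huv, one_smul])
    (fun z₀ => by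
      by_cases hz₀ : z₀ ∈ C
      · obtain ⟨b, hb⟩ := h z₀ hz₀
        set φ : (Fin n → ℂ) → R := fun z => ∑ i, (algebraMap ℂ R (z i) - a i) * b i with hφ
        have hφs : ContDiff ℝ ∞ φ :=
          contDiff_sum_algebraMap_sub_mul a (s := fun i _ => b i) fun _ => contDiff_const
        refine ⟨φ ⁻¹' {u | IsUnit u}, hφs.continuous.continuousAt.preimage_mem_nhds
          (Units.isOpen.mem_nhds ?_), fun z i => b i * Ring.inverse (φ z), ?_, ?_⟩
        · exact (congrArg IsUnit hb).mpr isUnit_one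
        · rw [contMDiffOn_iff_contDiffOn, contDiffOn_pi]
          intro i z hz
          obtain ⟨u, hu⟩ := hz
          have : ContDiffAt ℝ ∞ (fun z => Ring.inverse (φ z)) z :=
            ContDiffAt.comp (g := Ring.inverse) z (by rw [← hu]; exact contDiffAt_ringInverse ℝ u) hφs.contDiffAt
          exact (contDiffAt_const.mul this).contDiffWithinAt
        · intro z hz _
          simp_rw [← mul_assoc, ← Finset.sum_mul]
          exact Ring.mul_inverse_cancel _ hz
      · exact ⟨Cᶜ, hC.isOpen_compl.mem_nhds hz₀, fun _ => 0, contMDiffOn_const,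
          fun y hy hy' => absurd hy' hy⟩)
  have hgs : ContDiff ℝ ∞ g := g.contMDiff.contDiff
  exact ⟨fun i z => g z i, fun i => contDiff_pi.mp hgs i, fun z hz => hg z hz⟩

end BanachSection

section Separation
open scoped ContDiff Topology Manifold
open MeasureTheory

variable {n : ℕ} {R : Type*} [NormedCommRing R] [NormedAlgebra ℂ R]

theorem det_dbarMatrix_algHom_comp (χ : R →ₐ[ℂ] ℂ) (hχ : Continuous χ)
    {s : Fin n → (Fin n → ℂ) → R} (hs : ∀ i, ContDiff ℝ ∞ (s i)) (z : Fin n → ℂ) :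
    (dbarMatrix (fun i y => χ (s i y)) z).det = χ (dbarMatrix s z).det := by
  rw [AlgHom.map_det]
  congr 1
  ext j k
  exact dbar_clm_comp (⟨χ.toLinearMap, hχ⟩ : R →L[ℂ] ℂ) j
    ((hs k).differentiable (by simp) z)

theorem contDiff_det_dbarMatrix {s : Fin n → (Fin n → ℂ) → R} (hs : ∀ i, ContDiff ℝ ∞ (s i)) :
    ContDiff ℝ ∞ fun z => (dbarMatrix s z).det := by
  simp only [Matrix.det_apply]
  refine ContDiff.sum fun σ _ => ContDiff.const_smul _ (contDiff_prod fun i _ => ?_)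
  exact contDiff_dbar _ (hs i)

/-- A several-variable holomorphic functional calculus for a locally constant function: if the
joint spectrum of `a` lies in the disjoint union of compact sets `A` and `B`, some element of the
algebra takes a nonzero constant value at the characters over `A` and vanishes at those over `B`. -/
theorem exists_separating_element [CompleteSpace R] (hn : n ≠ 0) (a : Fin n → R)
    {A B : Set (Fin n → ℂ)} (hA : IsCompact A) (hB : IsCompact B) (hAB : Disjoint A B)
    (hspec : ∀ z ∉ A ∪ B, ∃ b : Fin n → R, ∑ i, (algebraMap ℂ R (z i) - a i) * b i = 1) :
    ∃ e : R, ∃ c : ℂ, c ≠ 0 ∧ ∀ χ : R →ₐ[ℂ] ℂ, Continuous χ →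
      ((fun i => χ (a i)) ∈ A → χ e = c) ∧ ((fun i => χ (a i)) ∈ B → χ e = 0) := by
  obtain ⟨δ, hδ, hd⟩ := hAB.exists_cthickenings hA hB.isClosed
  set Ω := thickening δ A
  have hΩ : IsOpen Ω := isOpen_thickening
  obtain ⟨s, hs, hsC⟩ := exists_contDiff_bezout a
    (C := cthickening δ A \ thickening (δ / 2) A)
    (isClosed_cthickening.sdiff isOpen_thickening) (fun z hz => hspec z (by
      rintro (h | h)
      · exact hz.2 (self_subset_thickening (by positivity) A h)
      · exact disjoint_left.mp hd hz.1 (self_subset_cthickening B h)))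
  obtain ⟨κ, hκ0, hκ1, -⟩ := exists_contMDiffMap_zero_one_of_isClosed (n := (⊤ : ℕ∞))
    𝓘(ℝ, Fin n → ℂ) (s := (thickening (3 * δ / 4) A)ᶜ) (t := cthickening (δ / 2) A)
    isOpen_thickening.isClosed_compl isClosed_cthickening
    (disjoint_compl_left_iff_subset.mpr
      (cthickening_subset_thickening' (by positivity) (by linarith) A))
  have hκs : ContDiff ℝ ∞ κ := κ.contMDiff.contDiff
  have hsupp : tsupport κ ⊆ cthickening (3 * δ / 4) A := by
    refine closure_minimal (fun z hz => ?_) isClosed_cthickening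
    by_contra hz'
    exact hz (hκ0 fun h => hz' (thickening_subset_cthickening _ _ h))
  set ψ : (Fin n → ℂ) → R :=
    fun z => κ z • (1 - ∑ i, (algebraMap ℂ R (z i) - a i) * s i z) with hψ
  have hψs : ContDiff ℝ ∞ ψ :=
    hκs.smul (contDiff_const.sub (contDiff_sum_algebraMap_sub_mul a hs))
  have hψsupp : tsupport ψ ⊆ cthickening (3 * δ / 4) A :=
    (closure_mono (show Function.support ψ ⊆ Function.support κ from
      fun z hz h0 => hz (by simp [hψ, h0]))).trans hsupp
  have hψc : HasCompactSupport ψ :=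
    hA.cthickening.of_isClosed_subset (isClosed_tsupport _) hψsupp
  have hψΩ : tsupport ψ ⊆ Ω :=
    hψsupp.trans (cthickening_subset_thickening' hδ (by linarith) A)
  have hψeq : ∀ z ∈ Ω, ψ z = 1 - ∑ i, (algebraMap ℂ R (z i) - a i) * s i z := fun z hz => by
    by_cases h : z ∈ cthickening (δ / 2) A
    · simp [hψ, hκ1 h]
    · rw [hψ]
      simp only
      rw [hsC z ⟨thickening_subset_cthickening _ _ hz,
        fun h' => h (thickening_subset_cthickening _ _ h')⟩]
      simp
  obtain ⟨h, hhs, hh1, c, hc, hint⟩ :=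
    exists_integral_radialSection (n := n) hn (ρ := (δ / 2) ^ 2) (by positivity)
  refine ⟨∫ z, ψ z * (dbarMatrix s z).det, c, hc, fun χ hχ => ?_⟩
  set x : Fin n → ℂ := fun i => χ (a i) with hx
  set L : R →L[ℂ] ℂ := ⟨χ.toLinearMap, hχ⟩ with hL
  have hLs : ∀ {f : (Fin n → ℂ) → R}, ContDiff ℝ ∞ f → ContDiff ℝ ∞ fun z => χ (f z) :=
    fun hf => (L.restrictScalars ℝ).contDiff.comp hf
  have hχint : χ (∫ z, ψ z * (dbarMatrix s z).det)
      = ∫ z, χ (ψ z) * (dbarMatrix (fun i y => χ (s i y)) z).det := by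
    have := L.integral_comp_comm
      ((hψs.mul (contDiff_det_dbarMatrix hs)).continuous.integrable_of_hasCompactSupport
        (μ := volume) hψc.mul_right)
    simp_rw [det_dbarMatrix_algHom_comp χ hχ hs, ← map_mul]
    exact this.symm
  have hcχ : HasCompactSupport fun z => χ (ψ z) := hψc.comp_left (map_zero χ)
  have hsχ : tsupport (fun z => χ (ψ z)) ⊆ Ω :=
    (closure_mono (show (Function.support fun z => χ (ψ z)) ⊆ Function.support ψ from
      fun z hz h0 => hz (by simp [h0]))).trans hψΩ
  have hbez : ∀ z ∈ Ω, ∑ i, (z i - x i) * χ (s i z) = 1 - χ (ψ z) := fun z hz => by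
    rw [hψeq z hz]
    simp [hx]
  have hrad := fun i => contDiff_radialSection hhs x i
  have hfar : ∀ z, δ / 2 ≤ ‖z - x‖ → normSqSum (z - x) * h (normSqSum (z - x)) = 1 :=
    fun z hz => hh1 _ ((pow_le_pow_left₀ (by positivity) hz 2).trans (norm_sq_le_normSqSum _))
  rw [hχint]
  refine ⟨fun hxA => ?_, fun hxB => ?_⟩
  · have hball : tsupport (fun z => 1 - ((normSqSum (z - x) * h (normSqSum (z - x)) : ℝ) : ℂ))
        ⊆ closedBall x (δ / 2) := by
      refine closure_minimal (fun z hz => ?_) isClosed_closedBall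
      by_contra hz'
      rw [mem_closedBall, dist_eq_norm, not_le] at hz'
      exact hz (by simp only; rw [hfar z hz'.le]; simp)
    rw [← hint x]
    refine integral_mul_det_dbarMatrix_eq hΩ x (hLs hψs) (fun i => hLs (hs i)) ?_ hrad hcχ
      ((isCompact_closedBall x (δ / 2)).of_isClosed_subset (isClosed_tsupport _) hball) hsχ
      (hball.trans fun z hz => mem_thickening_iff.mpr
        ⟨x, hxA, (mem_closedBall.mp hz).trans_lt (by linarith)⟩) hbez ?_
    · exact contDiff_const.sub 
        (contDiff_comp_normSqSum_sub (h := fun t => t * h t) (contDiff_id.mul hhs) x)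
    · intro z _
      rw [sum_mul_radialSection]
      ring
  · rw [integral_mul_det_dbarMatrix_eq hΩ x (hLs hψs) (fun i => hLs (hs i))
      (ψ₁ := fun _ => 0) contDiff_const hrad hcχ HasCompactSupport.zero hsχ (by simp [tsupport])
      hbez]
    · simp
    · intro z hz
      have : δ / 2 ≤ ‖z - x‖ := by
        by_contra hlt
        refine disjoint_left.mp hd (thickening_subset_cthickening _ _ hz)
          (mem_cthickening_of_dist_le z x δ B hxB ?_)
        rw [dist_eq_norm]
        linarith
      rw [sum_mul_radialSection, hfar z this]
      simp

end Separation

section PolynomialSeparation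

variable {n : ℕ}

theorem exists_algebraMap_eval_sub_aeval_eq_sum {R : Type*} [CommRing R] [Algebra ℂ R]
    (a : Fin n → R) (z : Fin n → ℂ) (p : MvPolynomial (Fin n) ℂ) :
    ∃ b : Fin n → R, algebraMap ℂ R (eval z p) - aeval a p
      = ∑ i, (algebraMap ℂ R (z i) - a i) * b i := by
  induction p using MvPolynomial.induction_on with
  | C c => exact ⟨0, by simp⟩
  | add p q hp hq =>
    obtain ⟨b, hb⟩ := hp
    obtain ⟨b', hb'⟩ := hq
    refine ⟨b + b', ?_⟩
    simp only [map_add, Pi.add_apply, mul_add, Finset.sum_add_distrib, ← hb, ← hb']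
    ring
  | mul_X p k hp =>
    obtain ⟨b, hb⟩ := hp
    refine ⟨fun i => b i * algebraMap ℂ R (z k) + if i = k then aeval a p else 0, ?_⟩
    have : ∑ i, (algebraMap ℂ R (z i) - a i) * (if i = k then aeval a p else 0)
        = (algebraMap ℂ R (z k) - a k) * aeval a p := by
      simp
    simp only [mul_add, Finset.sum_add_distrib, ← mul_assoc, ← Finset.sum_mul, ← hb, this]
    simp
    ring

/-- The coordinate functions on a subset of `ℂⁿ`. -/
def coordMap (X : Set (Fin n → ℂ)) (i : Fin n) : C(X, ℂ) :=
  ⟨fun x => x.1 i, (continuous_apply i).comp continuous_subtype_val⟩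

theorem aeval_coordMap_apply {X : Set (Fin n → ℂ)} (p : MvPolynomial (Fin n) ℂ) (x : X) :
    aeval (coordMap X) p x = eval x.1 p := by
  induction p using MvPolynomial.induction_on with
  | C c => simp
  | add p q hp hq => simp [hp, hq]
  | mul_X p k hp => simp [hp, coordMap]

/-- The uniform closure of the polynomials on a subset of `ℂⁿ`. -/
def uniformClosure (X : Set (Fin n → ℂ)) [CompactSpace X] : Subalgebra ℂ C(X, ℂ) :=
  (aeval (coordMap X) : MvPolynomial (Fin n) ℂ →ₐ[ℂ] C(X, ℂ)).range.topologicalClosure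

/-- Disjoint compact sets with polynomially convex union are separated by polynomials. -/
theorem exists_polynomial_separating {A B : Set (Fin n → ℂ)} (hA : IsCompact A)
    (hB : IsCompact B) (hAB : Disjoint A B)
    (hconv : ∀ z ∉ A ∪ B, ∃ q : MvPolynomial (Fin n) ℂ,
      eval z q = 1 ∧ ∀ x ∈ A ∪ B, ‖eval x q‖ < 1) {ε : ℝ} (hε : 0 < ε) :
    ∃ p : MvPolynomial (Fin n) ℂ, (∀ x ∈ A, ‖eval x p - 1‖ < ε) ∧ ∀ x ∈ B, ‖eval x p‖ < ε := by
  rcases eq_or_ne n 0 with rfl | hn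
  · rcases A.eq_empty_or_nonempty with rfl | ⟨x, hx⟩
    · exact ⟨0, by simp, fun _ _ => by simpa using hε⟩
    · refine ⟨1, fun _ _ => by simpa using hε, fun y hy => ?_⟩
      exact absurd hy (disjoint_left.mp hAB (Subsingleton.elim x y ▸ hx))
  set X := A ∪ B
  have : CompactSpace X := isCompact_iff_compactSpace.mp (hA.union hB)
  have hmem : ∀ p, aeval (coordMap X) p ∈ uniformClosure X := fun p =>
    Subalgebra.le_topologicalClosure _ ⟨p, rfl⟩
  have : CompleteSpace (uniformClosure X) :=
    (Subalgebra.isClosed_topologicalClosure _).completeSpace_coe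
  set a : Fin n → uniformClosure X := fun i => ⟨coordMap X i, by simpa using hmem (MvPolynomial.X i)⟩ with ha
  have hval : ∀ p, ((aeval a p : uniformClosure X) : C(X, ℂ)) = aeval (coordMap X) p := fun p =>
    MvPolynomial.comp_aeval_apply a (uniformClosure X).val p
  obtain ⟨e, c, hc, he⟩ := exists_separating_element hn a hA hB hAB fun z hz => by
    obtain ⟨q, hqz, hq⟩ := hconv z hz
    obtain ⟨b, hb⟩ := exists_algebraMap_eval_sub_aeval_eq_sum a z q
    have hlt : ‖aeval a q‖ < 1 := by
      change ‖((aeval a q : uniformClosure X) : C(X, ℂ))‖ < 1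
      rw [hval, ContinuousMap.norm_lt_iff _ one_pos]
      exact fun x => by rw [aeval_coordMap_apply]; exact hq x x.2
    have hu := isUnit_one_sub_of_norm_lt_one hlt
    rw [hqz, map_one] at hb
    refine ⟨fun i => b i * Ring.inverse (1 - aeval a q), ?_⟩
    simp_rw [← mul_assoc, ← Finset.sum_mul, ← hb]
    exact Ring.mul_inverse_cancel _ hu
  have hev : ∀ x : X, (x.1 ∈ A → (e : C(X, ℂ)) x = c) ∧ (x.1 ∈ B → (e : C(X, ℂ)) x = 0) :=
    fun x => he ((ContinuousMap.evalAlgHom ℂ ℂ x).comp (uniformClosure X).val)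
      ((continuous_eval_const x).comp continuous_subtype_val)
  have hcl : c⁻¹ • (e : C(X, ℂ)) ∈ closure
      ((aeval (coordMap X) : MvPolynomial (Fin n) ℂ →ₐ[ℂ] C(X, ℂ)).range : Set C(X, ℂ)) :=
    (uniformClosure X).smul_mem e.2 c⁻¹
  obtain ⟨_, ⟨p, rfl⟩, hp⟩ := Metric.mem_closure_iff.mp hcl ε hε
  have hpx : ∀ x : X, ‖eval x.1 p - c⁻¹ * (e : C(X, ℂ)) x‖ < ε := fun x => by
    rw [← aeval_coordMap_apply, ← dist_eq_norm, dist_comm]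
    exact (ContinuousMap.dist_apply_le_dist x).trans_lt hp
  refine ⟨p, fun x hx => ?_, fun x hx => ?_⟩
  · have := hpx ⟨x, Or.inl hx⟩
    rwa [(hev ⟨x, Or.inl hx⟩).1 hx, inv_mul_cancel₀ hc] at this
  · have := hpx ⟨x, Or.inr hx⟩
    rwa [(hev ⟨x, Or.inr hx⟩).2 hx, mul_zero, sub_zero] at this

end PolynomialSeparation

section Hull

variable {n : ℕ}

theorem norm_eval_le_sSup {K : Set (EuclideanSpace ℂ (Fin n))} (hK : IsCompact K)
    {z : EuclideanSpace ℂ (Fin n)} (hz : z ∈ K) (p : MvPolynomial (Fin n) ℂ) :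
    ‖eval (fun i => z i) p‖ ≤ sSup ((fun w => ‖eval (fun i => w i) p‖) '' K) := by
  have hc : Continuous fun w : EuclideanSpace ℂ (Fin n) => ‖eval (fun i => w i) p‖ :=
    ((MvPolynomial.continuous_eval p).comp (by fun_prop)).norm
  exact le_csSup (hK.image hc).bddAbove (mem_image_of_mem _ hz)

theorem sSup_norm_eval_nonneg (K : Set (EuclideanSpace ℂ (Fin n))) (p : MvPolynomial (Fin n) ℂ) :
    0 ≤ sSup ((fun w => ‖eval (fun i => w i) p‖) '' K) :=
  Real.sSup_nonneg (by rintro _ ⟨w, -, rfl⟩; exact norm_nonneg _)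

theorem subset_polyHull {K : Set (EuclideanSpace ℂ (Fin n))} (hK : IsCompact K) :
    K ⊆ polyHull K := fun _ hz p => norm_eval_le_sSup hK hz p

theorem polyHull_mono {K L : Set (EuclideanSpace ℂ (Fin n))} (hL : IsCompact L) (h : K ⊆ L) :
    polyHull K ⊆ polyHull L := fun _ hz p => (hz p).trans <|
  Real.sSup_le (by rintro _ ⟨w, hw, rfl⟩; exact norm_eval_le_sSup hL (h hw) p)
    (sSup_norm_eval_nonneg L p)

/-- A point outside the hull of a compact set is separated from it by a normalised polynomial. -/
theorem exists_eval_eq_one_of_notMem_polyHull {K : Set (EuclideanSpace ℂ (Fin n))}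
    (hK : IsCompact K) {z : EuclideanSpace ℂ (Fin n)} (hz : z ∉ polyHull K) :
    ∃ q : MvPolynomial (Fin n) ℂ, eval (fun i => z i) q = 1 ∧
      ∃ r, 0 ≤ r ∧ r < 1 ∧ ∀ x ∈ K, ‖eval (fun i => x i) q‖ ≤ r := by
  simp only [polyHull, mem_ofPred_eq, not_forall, not_le] at hz
  obtain ⟨p, hp⟩ := hz
  have h0 := (sSup_norm_eval_nonneg K p).trans_lt hp
  refine ⟨C (eval (fun i => z i) p)⁻¹ * p, ?_,
    sSup ((fun w => ‖eval (fun i => w i) p‖) '' K) / ‖eval (fun i => z i) p‖,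
    div_nonneg (sSup_norm_eval_nonneg K p) h0.le, (div_lt_one h0).mpr hp, fun x hx => ?_⟩
  · simp [inv_mul_cancel₀ (norm_pos_iff.mp h0)]
  · rw [eval_mul, eval_C, norm_mul, norm_inv, div_eq_inv_mul]
    gcongr
    exact norm_eval_le_sSup hK hx p

end Hull

/-- Let `S ⊆ ℂᵐ` be a compact polynomially convex set disjoint from a compact set `T` such that
`S ∪ T` is polynomially convex. If `S' ⊆ S` is compact polynomially convex, then `S' ∪ T` is
polynomially convex. -/
theorem stmt_5 (m : ℕ) (S T S' : Set (EuclideanSpace ℂ (Fin m)))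
    (hSc : IsCompact S) (hSpc : IsPolyConvex S) (hTc : IsCompact T) (hdisj : Disjoint S T)
    (hSTpc : IsPolyConvex (S ∪ T)) (hsub : S' ⊆ S) (hS'c : IsCompact S')
    (hS'pc : IsPolyConvex S') :
    IsPolyConvex (S' ∪ T) := by
  refine Subset.antisymm (fun z hz => ?_) (subset_polyHull (hS'c.union hTc))
  have hzST : z ∈ S ∪ T :=
    hSTpc ▸ polyHull_mono (hSc.union hTc) (union_subset_union_left T hsub) hz
  rcases hzST with hzS | hzT
  swap
  · exact Or.inr hzT
  refine Or.inl (by_contra fun hzS' => ?_)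
  obtain ⟨q, hqz, r, hr0, hr1, hq⟩ :=
    exists_eval_eq_one_of_notMem_polyHull hS'c (z := z) (by rwa [hS'pc])
  have hcoord : Continuous fun (w : EuclideanSpace ℂ (Fin m)) i => w i := by fun_prop
  obtain ⟨M, hM⟩ : ∃ M, ∀ x ∈ T, ‖eval (fun i => x i) q‖ ≤ M :=
    ⟨_, fun x hx => norm_eval_le_sSup hTc hx q⟩
  set N := max M 1
  have hN : 1 ≤ N := le_max_right _ _
  set ε := (1 - r) / (4 * N) with hε
  have hε0 : 0 < ε := div_pos (by linarith) (by linarith)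
  have hεN : N * ε = (1 - r) / 4 := by rw [hε]; field_simp
  have hεle : ε ≤ (1 - r) / 4 := by nlinarith
  obtain ⟨p, hpS, hpT⟩ := exists_polynomial_separating
    (hSc.image hcoord) (hTc.image hcoord)
    (by
      rw [disjoint_left]
      rintro _ ⟨x, hx, rfl⟩ ⟨y, hy, hxy⟩
      have : y = x := by ext i; exact congrFun hxy i
      exact disjoint_left.mp hdisj hx (this ▸ hy))
    (fun w hw => by
      rw [← image_union] at hw ⊢
      obtain ⟨q, hqw, r, -, hr, hq⟩ := exists_eval_eq_one_of_notMem_polyHull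
        (hSc.union hTc) (z := WithLp.toLp 2 w) (by
          rw [hSTpc]
          exact fun h => hw ⟨_, h, rfl⟩)
      exact ⟨q, hqw, by rintro _ ⟨x, hx, rfl⟩; exact (hq x hx).trans_lt hr⟩) hε0
  have hle := hz (q * p)
  have hzp := hpS _ (mem_image_of_mem _ hzS)
  have hub : sSup ((fun w : EuclideanSpace ℂ (Fin m) => ‖eval (fun i => w i) (q * p)‖) '' (S' ∪ T))
      ≤ max (r * (1 + ε)) (N * ε) := by
    refine Real.sSup_le ?_ (le_max_of_le_left (by positivity))
    rintro _ ⟨x, hx | hx, rfl⟩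
    · refine le_max_of_le_left ?_
      simp only [eval_mul, norm_mul]
      have := hpS _ (mem_image_of_mem _ (hsub hx))
      have h2 := norm_le_norm_sub_add (eval (fun i => x i) p) 1
      rw [norm_one] at h2
      exact mul_le_mul (hq x hx) (by linarith) (norm_nonneg _) hr0
    · refine le_max_of_le_right ?_
      simp only [eval_mul, norm_mul]
      exact mul_le_mul ((hM x hx).trans (le_max_left _ _))
        (hpT _ (mem_image_of_mem _ hx)).le (norm_nonneg _) (by linarith)
  rw [eval_mul, hqz, one_mul] at hle
  have hlow : 1 - ε < ‖eval (fun i => z i) p‖ := by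
    have h2 := norm_sub_norm_le (1 : ℂ) (eval (fun i => z i) p)
    rw [norm_one, norm_sub_rev] at h2
    linarith
  have := (hlow.trans_le hle).trans_le hub
  rcases lt_max_iff.mp this with h | h <;> nlinarith
end
end

section
/- Let L ⊆ ℂᴺ be compact polynomially convex and S ⊆ L × ℂⁿ a compact polynomially convex set disjoint from ℂᴺ × {0}. Then there exists a closed ball B ⊆ ℂⁿ centred at 0 of positive radius such that (L × B) ∩ S = ∅ and (L × B) ∪ S is polynomially convex. -/
noncomputable section
open Set Metric MvPolynomial

namespace PolyConvexUnion

open Topology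

variable {N n : ℕ}

/-- Evaluation of a polynomial in `N + n` variables at a point of `ℂᴺ × ℂⁿ`. -/
def evalAt (x : EuclideanSpace ℂ (Fin N) × EuclideanSpace ℂ (Fin n)) :
    MvPolynomial (Fin N ⊕ Fin n) ℂ →+* ℂ :=
  eval (Sum.elim (fun i => x.1 i) (fun j => x.2 j))

lemma continuous_evalAt (p : MvPolynomial (Fin N ⊕ Fin n) ℂ) :
    Continuous fun x : EuclideanSpace ℂ (Fin N) × EuclideanSpace ℂ (Fin n) => evalAt x p := by
  refine (MvPolynomial.continuous_eval p).comp (continuous_pi ?_)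
  rintro (i | j)
  · simp only [Sum.elim_inl]; fun_prop
  · simp only [Sum.elim_inr]; fun_prop

/-- Some polynomial is larger in modulus at `x` than it ever is on `A`. -/
def Separated (A : Set (EuclideanSpace ℂ (Fin N) × EuclideanSpace ℂ (Fin n)))
    (x : EuclideanSpace ℂ (Fin N) × EuclideanSpace ℂ (Fin n)) : Prop :=
  ∃ p : MvPolynomial (Fin N ⊕ Fin n) ℂ, ∃ c : ℝ, 0 ≤ c ∧
    (∀ y ∈ A, ‖evalAt y p‖ ≤ c) ∧ c < ‖evalAt x p‖

lemma Separated.notMem_polyHull2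
    {A : Set (EuclideanSpace ℂ (Fin N) × EuclideanSpace ℂ (Fin n))}
    {x : EuclideanSpace ℂ (Fin N) × EuclideanSpace ℂ (Fin n)} (h : Separated A x) :
    x ∉ polyHull2 A := by
  obtain ⟨p, c, hc, hA, hx⟩ := h
  intro hmem
  refine absurd (hmem p) (not_le.2 (lt_of_le_of_lt (Real.sSup_le ?_ hc) hx))
  rintro _ ⟨y, hy, rfl⟩
  exact hA y hy

lemma bddAbove_norm_evalAt {A : Set (EuclideanSpace ℂ (Fin N) × EuclideanSpace ℂ (Fin n))}
    (hA : IsCompact A) (p : MvPolynomial (Fin N ⊕ Fin n) ℂ) :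
    BddAbove ((fun w => ‖evalAt w p‖) '' A) :=
  (hA.image (continuous_evalAt p).norm).bddAbove

lemma separated_of_notMem {A : Set (EuclideanSpace ℂ (Fin N) × EuclideanSpace ℂ (Fin n))}
    (hA : IsCompact A) (hpc : IsPolyConvex2 A)
    {x : EuclideanSpace ℂ (Fin N) × EuclideanSpace ℂ (Fin n)} (hx : x ∉ A) : Separated A x := by
  rw [← hpc] at hx
  simp only [polyHull2, mem_ofPred_eq, not_forall, not_le] at hx
  obtain ⟨p, hp⟩ := hx
  refine ⟨p, _, Real.sSup_nonneg ?_, fun y hy => le_csSup (bddAbove_norm_evalAt hA p) ⟨y, hy, rfl⟩,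
    hp⟩
  rintro _ ⟨y, -, rfl⟩
  exact norm_nonneg _

lemma isPolyConvex2_of_separated
    {A : Set (EuclideanSpace ℂ (Fin N) × EuclideanSpace ℂ (Fin n))}
    (hA : IsCompact A) (h : ∀ x ∉ A, Separated A x) : IsPolyConvex2 A := by
  refine Subset.antisymm (fun x hx => ?_) fun x hx p =>
    le_csSup (bddAbove_norm_evalAt hA p) ⟨x, hx, rfl⟩
  by_contra hxA
  exact (h x hxA).notMem_polyHull2 hx

/-- A point whose first component lies outside a polynomially convex `L` is separated from any
subset of `L × ℂⁿ`. -/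
lemma separated_of_fst_notMem {L : Set (EuclideanSpace ℂ (Fin N))} (hLc : IsCompact L)
    (hLpc : IsPolyConvex L) {A : Set (EuclideanSpace ℂ (Fin N) × EuclideanSpace ℂ (Fin n))}
    (hA : A ⊆ L ×ˢ univ) {x : EuclideanSpace ℂ (Fin N) × EuclideanSpace ℂ (Fin n)}
    (hx : x.1 ∉ L) : Separated A x := by
  rw [← hLpc] at hx
  simp only [polyHull, mem_ofPred_eq, not_forall, not_le] at hx
  obtain ⟨p, hp⟩ := hx
  have hcont : Continuous fun z : EuclideanSpace ℂ (Fin N) => ‖eval (fun i => z i) p‖ :=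
    ((MvPolynomial.continuous_eval p).comp (by fun_prop)).norm
  have key : ∀ y : EuclideanSpace ℂ (Fin N) × EuclideanSpace ℂ (Fin n),
      evalAt y (rename Sum.inl p) = eval (fun i => y.1 i) p := by
    intro y
    rw [evalAt, eval_rename]
    rfl
  refine ⟨rename Sum.inl p, _, Real.sSup_nonneg ?_, fun y hy => ?_, hp.trans_eq (by rw [key])⟩
  · rintro _ ⟨y, -, rfl⟩
    exact norm_nonneg _
  · rw [key]
    exact le_csSup (hLc.image hcont).bddAbove ⟨y.1, (hA hy).1, rfl⟩

/-- The linear polynomial `y ↦ ⟪w, y.2⟫`. -/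
def innerPoly (N : ℕ) (w : EuclideanSpace ℂ (Fin n)) : MvPolynomial (Fin N ⊕ Fin n) ℂ :=
  ∑ j, C (star (w j)) * X (Sum.inr j)

lemma evalAt_innerPoly (w : EuclideanSpace ℂ (Fin n))
    (y : EuclideanSpace ℂ (Fin N) × EuclideanSpace ℂ (Fin n)) :
    evalAt y (innerPoly N w) = inner ℂ w y.2 := by
  simp [evalAt, innerPoly, PiLp.inner_apply, mul_comm]

lemma norm_evalAt_innerPoly_le (w : EuclideanSpace ℂ (Fin n))
    (y : EuclideanSpace ℂ (Fin N) × EuclideanSpace ℂ (Fin n)) :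
    ‖evalAt y (innerPoly N w)‖ ≤ ‖w‖ * ‖y.2‖ := by
  rw [evalAt_innerPoly]; exact norm_inner_le_norm _ _

lemma norm_evalAt_innerPoly_self (y : EuclideanSpace ℂ (Fin N) × EuclideanSpace ℂ (Fin n)) :
    ‖evalAt y (innerPoly N y.2)‖ = ‖y.2‖ * ‖y.2‖ := by
  rw [evalAt_innerPoly, inner_self_eq_norm_sq_to_K]; simp [sq]

/-- A point whose second component is longer than that of every point of `A` is separated
from `A`. -/
lemma separated_of_lt_norm_snd {A : Set (EuclideanSpace ℂ (Fin N) × EuclideanSpace ℂ (Fin n))}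
    {R : ℝ} (hR : 0 ≤ R) (hA : ∀ y ∈ A, ‖y.2‖ ≤ R)
    {x : EuclideanSpace ℂ (Fin N) × EuclideanSpace ℂ (Fin n)} (hx : R < ‖x.2‖) :
    Separated A x := by
  refine ⟨innerPoly N x.2, ‖x.2‖ * R, by positivity, fun y hy => ?_, ?_⟩
  · exact (norm_evalAt_innerPoly_le _ _).trans
      (mul_le_mul_of_nonneg_left (hA y hy) (norm_nonneg _))
  · rw [norm_evalAt_innerPoly_self]
    exact mul_lt_mul_of_pos_left hx (hR.trans_lt hx)

/-- If a Banach algebra norm on polynomials is dominated by the sup norm over a polynomially convex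
`S`, characters are evaluations at points of `S`, so the fibre coordinates generate the unit ideal
when they have no common zero on `S`. -/
lemma span_range_snd_eq_top {A : Type*} [NormedCommRing A] [NormedAlgebra ℂ A] [CompleteSpace A]
    [NormOneClass A] {S : Set (EuclideanSpace ℂ (Fin N) × EuclideanSpace ℂ (Fin n))}
    (hSc : IsCompact S) (hSpc : IsPolyConvex2 S) (hS0 : ∀ q ∈ S, q.2 ≠ 0)
    (f : MvPolynomial (Fin N ⊕ Fin n) ℂ →ₐ[ℂ] A)
    (hf : ∀ p, ∀ c : ℝ, 0 ≤ c → (∀ y ∈ S, ‖evalAt y p‖ ≤ c) → ‖f p‖ ≤ c) :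
    Ideal.span (range fun j : Fin n => f (X (Sum.inr j))) = ⊤ := by
  by_contra hne_top
  obtain ⟨M, hM, hle⟩ := Ideal.exists_le_maximal _ hne_top
  let φ := WeakDual.CharacterSpace.toAlgHom M.toCharacterSpace
  let x : EuclideanSpace ℂ (Fin N) × EuclideanSpace ℂ (Fin n) :=
    (WithLp.toLp 2 fun i => φ (f (X (Sum.inl i))), WithLp.toLp 2 fun j => φ (f (X (Sum.inr j))))
  have hφ : ∀ p, evalAt x p = φ (f p) := by
    intro p
    have h : (aeval (Sum.elim (fun i => x.1 i) (fun j => x.2 j)) :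
        MvPolynomial (Fin N ⊕ Fin n) ℂ →ₐ[ℂ] ℂ) = φ.comp f := by
      ext (i | j) <;> simp [x]
    exact DFunLike.congr_fun h p
  have hxS : x ∈ S := by
    by_contra hx
    obtain ⟨p, c, hc, hp, hlt⟩ := separated_of_notMem hSc hSpc hx
    rw [hφ] at hlt
    exact absurd hlt (not_lt.2 ((AlgHom.norm_apply_le_self φ (f p)).trans (hf p c hc hp)))
  refine hS0 x hxS ?_
  ext j
  exact M.toCharacterSpace_apply_eq_zero_of_mem (hle (Ideal.subset_span ⟨j, rfl⟩))

/-- Some polynomial is `1` on `ℂᴺ × {0}` and small on a polynomially convex set disjoint from it. -/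
lemma exists_poly_eq_one_of_snd_eq_zero
    {S : Set (EuclideanSpace ℂ (Fin N) × EuclideanSpace ℂ (Fin n))}
    (hSc : IsCompact S) (hSpc : IsPolyConvex2 S) (hS0 : ∀ q ∈ S, q.2 ≠ 0) {ε : ℝ} (hε : 0 < ε) :
    ∃ q : MvPolynomial (Fin N ⊕ Fin n) ℂ,
      (∀ x : EuclideanSpace ℂ (Fin N) × EuclideanSpace ℂ (Fin n), x.2 = 0 → evalAt x q = 1) ∧
        ∀ x ∈ S, ‖evalAt x q‖ < ε := by
  rcases S.eq_empty_or_nonempty with rfl | hne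
  · exact ⟨1, by simp, by simp⟩
  have : CompactSpace S := isCompact_iff_compactSpace.1 hSc
  have : Nonempty S := hne.to_subtype
  let ev : MvPolynomial (Fin N ⊕ Fin n) ℂ →ₐ[ℂ] C(S, ℂ) :=
    aeval fun k => ⟨fun x => evalAt x.1 (X k), (continuous_evalAt _).comp continuous_subtype_val⟩
  have hev : ∀ p (x : S), ev p x = evalAt x.1 p := by
    intro p x
    have h := comp_aeval_apply (R := ℂ)
      (f := fun k => (⟨fun x => evalAt x.1 (X k),
        (continuous_evalAt _).comp continuous_subtype_val⟩ : C(S, ℂ)))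
      (φ := ContinuousMap.evalAlgHom ℂ ℂ x) p
    have h2 : ev p x = aeval (fun k => evalAt x.1 (X k)) p := h
    rw [h2, MvPolynomial.aeval_eq_eval, evalAt]
    simp
  let P : Subalgebra ℂ C(S, ℂ) := ev.range.topologicalClosure
  have : CompleteSpace P := (Subalgebra.isClosed_topologicalClosure _).completeSpace_coe
  let toP : MvPolynomial (Fin N ⊕ Fin n) ℂ →ₐ[ℂ] P :=
    ev.codRestrict P fun p => Subalgebra.le_topologicalClosure _ ⟨p, rfl⟩
  have : NormOneClass P := ⟨norm_one (α := C(S, ℂ))⟩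
  have htop := span_range_snd_eq_top hSc hSpc hS0 toP fun p c hc hp =>
    (ContinuousMap.norm_le _ hc).2 fun y => (congrArg norm (hev p y)).trans_le (hp y.1 y.2)
  obtain ⟨c, hc⟩ := Ideal.mem_span_range_iff_exists_fun.1
    ((Ideal.eq_top_iff_one _).1 htop)
  set W : ℝ := ∑ j : Fin n, ‖ev (X (Sum.inr j))‖
  have hW0 : 0 ≤ W := Finset.sum_nonneg fun _ _ => norm_nonneg _
  have happrox : ∀ j, ∃ a, ‖(c j : C(S, ℂ)) - ev a‖ < ε / (W + 1) := by
    intro j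
    have hmem : (c j : C(S, ℂ)) ∈ closure (ev.range : Set C(S, ℂ)) := (c j).2
    obtain ⟨_, ⟨a, rfl⟩, ha⟩ := Metric.mem_closure_iff.1 hmem (ε / (W + 1)) (by positivity)
    exact ⟨a, by rwa [← dist_eq_norm]⟩
  choose a ha using happrox
  refine ⟨1 - ∑ j, a j * X (Sum.inr j), fun x hx => ?_, fun x hx => ?_⟩
  · simp [evalAt, hx]
  · have hc' : ∑ j, (c j : C(S, ℂ)) * ev (X (Sum.inr j)) = 1 := by
      simpa [toP] using congrArg (Subtype.val) hc
    have hval : evalAt x (1 - ∑ j, a j * X (Sum.inr j)) =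
        (∑ j, ((c j : C(S, ℂ)) - ev (a j)) * ev (X (Sum.inr j))) ⟨x, hx⟩ := by
      rw [← hev _ ⟨x, hx⟩]
      simp only [map_sub, map_one, map_sum, map_mul, sub_mul, Finset.sum_sub_distrib, hc']
    rw [hval]
    refine (ContinuousMap.norm_coe_le_norm _ _).trans_lt ?_
    calc ‖∑ j, ((c j : C(S, ℂ)) - ev (a j)) * ev (X (Sum.inr j))‖
        ≤ ∑ j, ε / (W + 1) * ‖ev (X (Sum.inr j))‖ :=
          norm_sum_le_of_le _ fun j _ => (norm_mul_le _ _).trans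
            (mul_le_mul_of_nonneg_right (ha j).le (norm_nonneg _))
      _ = ε * (W / (W + 1)) := by rw [← Finset.mul_sum]; ring
      _ < ε := by
          have : W / (W + 1) < 1 := (div_lt_one (by positivity)).2 (by linarith)
          nlinarith

/-- The smoothstep map `t ↦ 3t² - 2t³` has the attracting fixed points `0` and `1`. -/
lemma norm_smoothstep_le {t : ℂ} (ht : ‖t‖ ≤ 1 / 4) :
    ‖3 * t ^ 2 - 2 * t ^ 3‖ ≤ 7 / 8 * ‖t‖ := by
  have h : ‖3 * t ^ 2 - 2 * t ^ 3‖ ≤ 3 * ‖t‖ ^ 2 + 2 * ‖t‖ ^ 3 := by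
    refine (norm_sub_le _ _).trans (by simp)
  have h0 := norm_nonneg t
  nlinarith [mul_nonneg h0 h0, mul_nonneg h0 (sub_nonneg.2 ht),
    mul_nonneg (mul_nonneg h0 h0) (sub_nonneg.2 ht)]

/-- Iterating smoothstep sharpens a polynomial that is roughly `0` or `1`. -/
lemma exists_poly_sharpen (q : MvPolynomial (Fin N ⊕ Fin n) ℂ) {ε : ℝ} (hε : 0 < ε) :
    ∃ Q : MvPolynomial (Fin N ⊕ Fin n) ℂ,
      ∀ x : EuclideanSpace ℂ (Fin N) × EuclideanSpace ℂ (Fin n),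
        (‖evalAt x q‖ < 1 / 4 → ‖evalAt x Q‖ < ε) ∧
        (‖1 - evalAt x q‖ < 1 / 4 → ‖1 - evalAt x Q‖ < ε) := by
  have hiter : ∀ m : ℕ, ∃ Q : MvPolynomial (Fin N ⊕ Fin n) ℂ,
      ∀ x : EuclideanSpace ℂ (Fin N) × EuclideanSpace ℂ (Fin n),
        (‖evalAt x q‖ < 1 / 4 → ‖evalAt x Q‖ ≤ (7 / 8) ^ m * (1 / 4)) ∧
        (‖1 - evalAt x q‖ < 1 / 4 → ‖1 - evalAt x Q‖ ≤ (7 / 8) ^ m * (1 / 4)) := by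
    intro m
    induction m with
    | zero => exact ⟨q, fun x => ⟨fun h => by simpa using h.le, fun h => by simpa using h.le⟩⟩
    | succ m ih =>
      obtain ⟨Q, hQ⟩ := ih
      have hm : ((7 : ℝ) / 8) ^ m ≤ 1 := pow_le_one₀ (by norm_num) (by norm_num)
      have step : ∀ t : ℂ, ‖t‖ ≤ (7 / 8) ^ m * (1 / 4) →
          ‖3 * t ^ 2 - 2 * t ^ 3‖ ≤ (7 / 8) ^ (m + 1) * (1 / 4) := fun t ht => by
        have := norm_smoothstep_le (t := t) (by linarith)
        have hpow : ((7 : ℝ) / 8) ^ (m + 1) = (7 / 8) ^ m * (7 / 8) := pow_succ _ _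
        linarith
      refine ⟨3 * Q ^ 2 - 2 * Q ^ 3, fun x => ⟨fun h => ?_, fun h => ?_⟩⟩
      · simpa only [map_sub, map_mul, map_pow, map_ofNat] using step _ ((hQ x).1 h)
      · convert step _ ((hQ x).2 h) using 2
        simp only [map_sub, map_mul, map_pow, map_ofNat]
        ring
  obtain ⟨m, hm⟩ := exists_pow_lt_of_lt_one hε (by norm_num : (7 / 8 : ℝ) < 1)
  obtain ⟨Q, hQ⟩ := hiter m
  have hpos : (0 : ℝ) < (7 / 8) ^ m := by positivity
  exact ⟨Q, fun x => ⟨fun h => ((hQ x).1 h).trans_lt (by linarith),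
    fun h => ((hQ x).2 h).trans_lt (by linarith)⟩⟩

lemma exists_norm_evalAt_le {A : Set (EuclideanSpace ℂ (Fin N) × EuclideanSpace ℂ (Fin n))}
    (hA : IsCompact A) (p : MvPolynomial (Fin N ⊕ Fin n) ℂ) :
    ∃ M : ℝ, 0 < M ∧ ∀ y ∈ A, ‖evalAt y p‖ ≤ M := by
  obtain ⟨M, hM⟩ := hA.exists_bound_of_continuousOn (continuous_evalAt p).continuousOn
  exact ⟨max M 1, by positivity, fun y hy => (hM y hy).trans (le_max_left _ _)⟩

lemma exists_prod_closedBall_subset {L : Set (EuclideanSpace ℂ (Fin N))} (hLc : IsCompact L)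
    {V : Set (EuclideanSpace ℂ (Fin N) × EuclideanSpace ℂ (Fin n))} (hV : IsOpen V)
    (hLV : ∀ z ∈ L, (z, 0) ∈ V) :
    ∃ r : ℝ, 0 < r ∧ L ×ˢ closedBall (0 : EuclideanSpace ℂ (Fin n)) r ⊆ V := by
  obtain ⟨u, v, -, hv, hLu, h0v, huv⟩ := generalized_tube_lemma hLc
    (isCompact_singleton (x := (0 : EuclideanSpace ℂ (Fin n)))) hV (by
      rintro ⟨z, w⟩ ⟨hz, hw⟩
      obtain rfl : w = 0 := hw
      exact hLV z hz)
  obtain ⟨r, hr, hrv⟩ := Metric.nhds_basis_closedBall.mem_iff.1 (hv.mem_nhds (h0v rfl))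
  exact ⟨r, hr, (prod_mono hLu hrv).trans huv⟩

/-- Near `S` the union is separated like `S` alone. -/
lemma separated_union_of_near_right
    {T S : Set (EuclideanSpace ℂ (Fin N) × EuclideanSpace ℂ (Fin n))} (hT : IsCompact T)
    {q : MvPolynomial (Fin N ⊕ Fin n) ℂ} (hqT : ∀ y ∈ T, ‖1 - evalAt y q‖ < 1 / 4)
    (hqS : ∀ y ∈ S, ‖evalAt y q‖ < 1 / 4)
    {x : EuclideanSpace ℂ (Fin N) × EuclideanSpace ℂ (Fin n)} (hxq : ‖evalAt x q‖ < 1 / 4)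
    (hx : Separated S x) : Separated (T ∪ S) x := by
  obtain ⟨p, c, hc, hpS, hpx⟩ := hx
  obtain ⟨M, hM, hpT⟩ := exists_norm_evalAt_le hT p
  set d := ‖evalAt x p‖
  have hd0 : 0 < d := hc.trans_lt hpx
  obtain ⟨ε, hε, hε1, hε2⟩ : ∃ ε : ℝ, 0 < ε ∧ c * (1 + ε) < d * (1 - ε) ∧ M * ε < d * (1 - ε) := by
    refine ⟨min ((d - c) / (2 * (d + c))) (d / (2 * (M + d))), by
      have : 0 < d - c := sub_pos.2 hpx
      positivity, ?_, ?_⟩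
    · have h1 := min_le_left ((d - c) / (2 * (d + c))) (d / (2 * (M + d)))
      rw [le_div_iff₀ (by positivity)] at h1
      nlinarith
    · have h1 := min_le_right ((d - c) / (2 * (d + c))) (d / (2 * (M + d)))
      rw [le_div_iff₀ (by positivity)] at h1
      nlinarith
  obtain ⟨Q, hQ⟩ := exists_poly_sharpen q hε
  have hlow : 1 - ε < ‖1 - evalAt x Q‖ := by
    have h1 := norm_sub_norm_le (1 : ℂ) (evalAt x Q)
    have h2 := (hQ x).1 hxq
    rw [norm_one] at h1
    linarith
  refine ⟨p * (1 - Q), max (M * ε) (c * (1 + ε)), le_max_of_le_left (by positivity), ?_, ?_⟩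
  · rintro y (hy | hy) <;> simp only [map_mul, map_sub, map_one, norm_mul]
    · exact le_max_of_le_left (mul_le_mul (hpT y hy) ((hQ y).2 (hqT y hy)).le (norm_nonneg _) hM.le)
    · refine le_max_of_le_right (mul_le_mul (hpS y hy) ?_ (norm_nonneg _) hc)
      refine (norm_sub_le _ _).trans ?_
      rw [norm_one]
      linarith [(hQ y).1 (hqS y hy)]
  · simp only [map_mul, map_sub, map_one, norm_mul]
    exact (max_lt hε2 hε1).trans (mul_lt_mul_of_pos_left hlow hd0)

/-- Separation by `p` on `T` can be improved to separation from `T ∪ S` near `T`. -/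
lemma separated_union_of_near_left
    {T S : Set (EuclideanSpace ℂ (Fin N) × EuclideanSpace ℂ (Fin n))} (hS : IsCompact S)
    {q : MvPolynomial (Fin N ⊕ Fin n) ℂ} (hqT : ∀ y ∈ T, ‖1 - evalAt y q‖ < 1 / 4)
    (hqS : ∀ y ∈ S, ‖evalAt y q‖ < 1 / 4)
    {x : EuclideanSpace ℂ (Fin N) × EuclideanSpace ℂ (Fin n)} (hxq : ‖1 - evalAt x q‖ < 1 / 4)
    (hx : Separated T x) : Separated (T ∪ S) x := by
  rw [union_comm]
  refine separated_union_of_near_right (q := 1 - q) hS ?_ ?_ ?_ hx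
  · simpa using hqS
  · simpa using hqT
  · simpa using hxq

/-- A point off `S` with nonzero fibre component is separated from `(L × {0}) ∪ S`, hence so is a
neighbourhood of it from `(L × B) ∪ S` for a small ball `B`. -/
lemma exists_nhds_separated {L : Set (EuclideanSpace ℂ (Fin N))}
    {S : Set (EuclideanSpace ℂ (Fin N) × EuclideanSpace ℂ (Fin n))}
    (hLc : IsCompact L) (hSc : IsCompact S)
    {x : EuclideanSpace ℂ (Fin N) × EuclideanSpace ℂ (Fin n)} (hx : Separated S x)
    (hx0 : x.2 ≠ 0) :
    ∃ U ∈ 𝓝 x, ∃ r : ℝ, 0 < r ∧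
      ∀ y ∈ U, Separated ((L ×ˢ closedBall (0 : EuclideanSpace ℂ (Fin n)) r) ∪ S) y := by
  obtain ⟨p, c, hc, hpS, hpx⟩ := hx
  obtain ⟨M, hM, hMS⟩ := exists_norm_evalAt_le hSc (innerPoly N x.2)
  have hd0 : 0 < ‖evalAt x p‖ := hc.trans_lt hpx
  have hw0 : 0 < ‖x.2‖ := norm_pos_iff.2 hx0
  obtain ⟨k, hk⟩ := exists_pow_lt_of_lt_one (y := c / ‖evalAt x p‖)
    (by positivity : 0 < ‖x.2‖ * ‖x.2‖ / M) ((div_lt_one hd0).2 hpx)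
  rw [div_pow, div_lt_div_iff₀ (by positivity) hM] at hk
  let f := p ^ k * innerPoly N x.2
  have hfx : c ^ k * M < ‖evalAt x f‖ := by
    simp only [f, map_mul, map_pow, norm_mul, norm_pow, norm_evalAt_innerPoly_self]
    linarith
  obtain ⟨t, hct, htx⟩ := exists_between hfx
  have ht0 : 0 < t := lt_of_le_of_lt (by positivity) hct
  obtain ⟨r, hr, hrt⟩ := exists_prod_closedBall_subset (n := n) hLc
    (isOpen_lt (continuous_evalAt f).norm continuous_const : IsOpen {y | ‖evalAt y f‖ < t}) (by
      intro z _
      simpa [f, evalAt_innerPoly] using ht0)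
  refine ⟨{y | t < ‖evalAt y f‖},
    (isOpen_lt continuous_const (continuous_evalAt f).norm).mem_nhds htx, r, hr,
    fun y hy => ⟨f, t, ht0.le, ?_, hy⟩⟩
  rintro u (hu | hu)
  · exact le_of_lt (hrt hu)
  · refine le_trans ?_ hct.le
    simp only [f, map_mul, map_pow, norm_mul, norm_pow]
    exact mul_le_mul (pow_le_pow_left₀ (norm_nonneg _) (hpS u hu) k) (hMS u hu) (norm_nonneg _)
      (by positivity)

lemma Separated.mono {A B : Set (EuclideanSpace ℂ (Fin N) × EuclideanSpace ℂ (Fin n))}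
    {x : EuclideanSpace ℂ (Fin N) × EuclideanSpace ℂ (Fin n)} (h : Separated B x) (hAB : A ⊆ B) :
    Separated A x := by
  obtain ⟨p, c, hc, hp, hx⟩ := h
  exact ⟨p, c, hc, fun y hy => hp y (hAB hy), hx⟩

lemma exists_separated_of_isCompact {L : Set (EuclideanSpace ℂ (Fin N))}
    {S D : Set (EuclideanSpace ℂ (Fin N) × EuclideanSpace ℂ (Fin n))}
    (hLc : IsCompact L) (hSc : IsCompact S) (hD : IsCompact D)
    (hDS : ∀ x ∈ D, Separated S x) (hD0 : ∀ x ∈ D, x.2 ≠ 0) :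
    ∃ r : ℝ, 0 < r ∧
      ∀ y ∈ D, Separated ((L ×ˢ closedBall (0 : EuclideanSpace ℂ (Fin n)) r) ∪ S) y := by
  have hshrink : ∀ {r s : ℝ}, r ≤ s →
      (L ×ˢ closedBall (0 : EuclideanSpace ℂ (Fin n)) r) ∪ S ⊆ (L ×ˢ closedBall 0 s) ∪ S :=
    fun h => union_subset_union_left _ (prod_mono_right (closedBall_subset_closedBall h))
  refine hD.induction_on (p := fun D => ∃ r : ℝ, 0 < r ∧
      ∀ y ∈ D, Separated ((L ×ˢ closedBall (0 : EuclideanSpace ℂ (Fin n)) r) ∪ S) y)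
    ⟨1, one_pos, by simp⟩ ?_ ?_ ?_
  · rintro s t hst ⟨r, hr, h⟩
    exact ⟨r, hr, fun y hy => h y (hst hy)⟩
  · rintro s t ⟨r, hr, h⟩ ⟨r', hr', h'⟩
    refine ⟨min r r', lt_min hr hr', ?_⟩
    rintro y (hy | hy)
    · exact (h y hy).mono (hshrink (min_le_left _ _))
    · exact (h' y hy).mono (hshrink (min_le_right _ _))
  · intro x hx
    obtain ⟨U, hU, h⟩ := exists_nhds_separated hLc hSc (hDS x hx) (hD0 x hx)
    exact ⟨U, mem_nhdsWithin_of_mem_nhds hU, h⟩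

end PolyConvexUnion

open PolyConvexUnion

/-- Let `L ⊆ ℂᴺ` be compact polynomially convex and `S ⊆ L × ℂⁿ` a compact polynomially convex
set disjoint from `ℂᴺ × {0}`. Then there exists a closed ball `B ⊆ ℂⁿ` centred at `0` of positive
radius such that `(L × B) ∩ S = ∅` and `(L × B) ∪ S` is polynomially convex. -/
theorem stmt_6 (N n : ℕ) (L : Set (EuclideanSpace ℂ (Fin N)))
    (S : Set (EuclideanSpace ℂ (Fin N) × EuclideanSpace ℂ (Fin n)))
    (hLc : IsCompact L) (hLpc : IsPolyConvex L)
    (hSc : IsCompact S) (hSpc : IsPolyConvex2 S)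
    (hSL : S ⊆ L ×ˢ univ) (hS0 : ∀ q ∈ S, q.2 ≠ 0) :
    ∃ r : ℝ, 0 < r ∧ (L ×ˢ closedBall (0 : EuclideanSpace ℂ (Fin n)) r) ∩ S = ∅ ∧
      IsPolyConvex2 ((L ×ˢ closedBall (0 : EuclideanSpace ℂ (Fin n)) r) ∪ S) := by
  obtain ⟨q, hq1, hqS⟩ := exists_poly_eq_one_of_snd_eq_zero hSc hSpc hS0
    (by norm_num : (0 : ℝ) < 1 / 4)
  have hU : IsOpen {y | ‖evalAt y q‖ < 1 / 4} :=
    isOpen_lt (continuous_evalAt q).norm continuous_const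
  have hV : IsOpen {y | ‖1 - evalAt y q‖ < 1 / 4} :=
    isOpen_lt (continuous_const.sub (continuous_evalAt q)).norm continuous_const
  obtain ⟨R, hRS⟩ := hSc.exists_bound_of_continuousOn continuous_snd.continuousOn
  let D := (L ×ˢ closedBall (0 : EuclideanSpace ℂ (Fin n)) (max R 1)) ∩
    ({y | ‖evalAt y q‖ < 1 / 4}ᶜ ∩ {y | ‖1 - evalAt y q‖ < 1 / 4}ᶜ)
  have hD : IsCompact D := (hLc.prod (isCompact_closedBall _ _)).inter_right
    (hU.isClosed_compl.inter hV.isClosed_compl)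
  obtain ⟨r₁, hr₁, hr₁D⟩ := exists_separated_of_isCompact hLc hSc hD
    (fun x hx => separated_of_notMem hSc hSpc fun hxS => hx.2.1 (hqS x hxS))
    (fun x hx h0 => hx.2.2 (by simp [hq1 x h0]))
  obtain ⟨r₂, hr₂, hr₂V⟩ := exists_prod_closedBall_subset (n := n) hLc hV
    (fun z _ => by simp [hq1 (z, 0) rfl])
  let r := min r₁ (min r₂ 1)
  have hr : 0 < r := by positivity
  have hqT : ∀ y ∈ L ×ˢ closedBall (0 : EuclideanSpace ℂ (Fin n)) r, ‖1 - evalAt y q‖ < 1 / 4 :=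
    fun y hy => hr₂V (prod_mono_right (closedBall_subset_closedBall
      ((min_le_right _ _).trans (min_le_left _ _))) hy)
  have hTc := hLc.prod (isCompact_closedBall (0 : EuclideanSpace ℂ (Fin n)) r)
  refine ⟨r, hr, ?_, isPolyConvex2_of_separated (hTc.union hSc) fun x hx => ?_⟩
  · refine eq_empty_of_forall_notMem fun y ⟨hyT, hyS⟩ => ?_
    have h := norm_add_le (1 - evalAt y q) (evalAt y q)
    rw [sub_add_cancel, norm_one] at h
    linarith [hqT y hyT, hqS y hyS]
  rw [mem_union, not_or] at hx
  by_cases hxL : x.1 ∈ L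
  swap
  · exact separated_of_fst_notMem hLc hLpc
      (union_subset (prod_mono_right (subset_univ _)) hSL) hxL
  by_cases hxU : ‖evalAt x q‖ < 1 / 4
  · exact separated_union_of_near_right hTc hqT hqS hxU (separated_of_notMem hSc hSpc hx.2)
  by_cases hxV : ‖1 - evalAt x q‖ < 1 / 4
  · refine separated_union_of_near_left hSc hqT hqS hxV
      (separated_of_lt_norm_snd hr.le (fun y hy => mem_closedBall_zero_iff.1 hy.2) ?_)
    by_contra hle
    exact hx.1 ⟨hxL, mem_closedBall_zero_iff.2 (not_lt.1 hle)⟩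
  by_cases hxR : ‖x.2‖ ≤ max R 1
  · exact (hr₁D x ⟨⟨hxL, mem_closedBall_zero_iff.2 hxR⟩, hxU, hxV⟩).mono
      (union_subset_union_left _ (prod_mono_right (closedBall_subset_closedBall (min_le_left _ _))))
  · refine separated_of_lt_norm_snd (by positivity) ?_ (not_le.1 hxR)
    rintro y (hy | hy)
    · exact (mem_closedBall_zero_iff.1 hy.2).trans
        (((min_le_right _ _).trans (min_le_right _ _)).trans (le_max_right _ _))
    · exact (hRS y hy).trans (le_max_left _ _)
end
end
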